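/- Let F_k be a finitely generated free group and let φ be an injective endomorphism of F_k. Then for every sufficiently large prime p, the mapping torus HNN_φ(F_k) has a subgroup of finite index that is residually (finite p). That is, there exists N such that for all primes p > N, HNN_φ(F_k) is virtually a residually (finite p)-group. -/

import Mathlib

/-- The defining relations of the mapping torus (ascending HNN extension)
`HNN_φ(F_k) = ⟨x₁,…,x_k, t ∣ t xᵢ t⁻¹ = φ(xᵢ)⟩`, with generators `Option (Fin k)`
where `none` is the stable letter `t` and `some i` is `xᵢ`. -/
def mappingTorusRels (k : ℕ) (φ : FreeGroup (Fin k) →* FreeGroup (Fin k)) :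
    Set (FreeGroup (Option (Fin k))) :=
  { r | ∃ i : Fin k,
      r = FreeGroup.of none * FreeGroup.map Option.some (FreeGroup.of i) *
          (FreeGroup.of none)⁻¹ * (FreeGroup.map Option.some (φ (FreeGroup.of i)))⁻¹ }

/-- The mapping torus `HNN_φ(F_k)` of an endomorphism `φ` of the free group `F_k`. -/
abbrev MappingTorus (k : ℕ) (φ : FreeGroup (Fin k) →* FreeGroup (Fin k)) : Type :=
  PresentedGroup (mappingTorusRels k φ)

/-- A group `G` is residually (finite `p`) if every nontrivial element has a nontrivial
image under some homomorphism onto a finite `p`-group. -/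
def ResiduallyFiniteP (p : ℕ) (G : Type*) [Group G] : Prop :=
  ∀ g : G, g ≠ 1 → ∃ (Q : Type) (_ : Group Q) (_ : Fintype Q) (f : G →* Q),
    Function.Surjective f ∧ IsPGroup p Q ∧ f g ≠ 1

/-!
A tuple `X` of `2 × 2` matrices over a domain that generates a free group modulo scalars, together
with an endomorphism `σ` of the domain carrying `X` to the tuple of words `φ(X)`, makes `F_k` act on
matrices by conjugation and the stable letter act through `σ`. For the generic tuple, `σ` is an
endomorphism of a polynomial ring, i.e. the self-map of an affine space of matrices that is given by
the words `φ(x_i)`.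

Over a finite field a counting argument on degrees (Borisov–Sapir) shows that this self-map has many
quasi-fixed points, that is points `x` with `σ(x) = Frob^e(x)`; they are dense in the image of
`σ ^ n` for `n` large. At the maximal ideal `m` of such a point `σ` is bijective on residue fields.
It is bijective modulo every power of `m` as well, once the generators of the coordinate ring are
simple roots of polynomials with coefficients in the range of `σ`. In characteristic zero this
holds generically by algebraicity, and hence it holds modulo `p` for `p` large. The mapping torus
then acts on the finite rings of matrices modulo `m ^ j`. In characteristic `p` the automorphisms
that are trivial modulo `m ^ 2` have `p`-power order, and the intersection of the powers of `m` is
zero by Krull.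
-/

/-! ### Quasi-fixed points over finite fields -/

section LowDegree

open MvPolynomial
open scoped MonomialOrder

section Triangular

variable {R ι : Type*} [CommRing R] {m : MonomialOrder ι} {b : (ι →₀ ℕ) → MvPolynomial ι R}

theorem basisMonomials_constr_surjective (hmonic : ∀ d, m.Monic (b d))
    (hdegree : ∀ d, m.degree (b d) = d) :
    Function.Surjective ((basisMonomials ι R).constr R b) := by
  classical
  have hmonomial (d : ι →₀ ℕ) :
      monomial d 1 ∈ ((basisMonomials ι R).constr R b).range := by
    obtain ⟨a, rfl⟩ := m.toSyn.symm.surjective d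
    induction a using WellFoundedLT.induction with
    | ind a ih =>
      set d := m.toSyn.symm a with hd
      have hlower : monomial d 1 - b d ∈ ((basisMonomials ι R).constr R b).range := by
        rw [as_sum (monomial d (1 : R) - b d)]
        refine Submodule.sum_mem _ fun c hc => ?_
        have hne : c ≠ d := by
          intro h
          have hlead := (hmonic d).coeff_degree
          rw [hdegree] at hlead
          simp [h, coeff_monomial, hlead] at hc
        have hcb : c ∈ (b d).support := by
          rw [mem_support_iff, coeff_sub, coeff_monomial, if_neg hne.symm, zero_sub,
            neg_ne_zero] at hc
          exact mem_support_iff.mpr hc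
        have hlt : m.toSyn c < a := by
          refine lt_of_le_of_ne ?_ fun h => hne (by simp [hd, ← h])
          simpa [hdegree, hd] using m.le_degree hcb
        have hmem := Submodule.smul_mem _ (coeff c (monomial d 1 - b d)) (ih _ hlt)
        rwa [AddEquiv.symm_apply_apply, smul_monomial, smul_eq_mul, mul_one] at hmem
      rw [← sub_add_cancel (monomial d 1) (b d)]
      exact add_mem hlower ⟨monomial d 1, (basisMonomials ι R).constr_basis R b d⟩
  intro g
  rw [← LinearMap.mem_range, g.as_sum]
  refine Submodule.sum_mem _ fun d _ => ?_
  simpa [smul_monomial] using Submodule.smul_mem _ (coeff d g) (hmonomial d)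

theorem coeff_degree_basisMonomials_constr (hmonic : ∀ d, m.Monic (b d))
    (hdegree : ∀ d, m.degree (b d) = d) (g : MvPolynomial ι R) :
    coeff (m.degree g) ((basisMonomials ι R).constr R b g) = m.leadingCoeff g := by
  have hexpand : (basisMonomials ι R).constr R b g = ∑ d ∈ g.support, coeff d g • b d := by
    rw [Module.Basis.constr_apply]; rfl
  have hlead := (hmonic (m.degree g)).coeff_degree
  rw [hdegree] at hlead
  rw [hexpand, coeff_sum, Finset.sum_eq_single (m.degree g)]
  · rw [coeff_smul, hlead, smul_eq_mul, mul_one, MonomialOrder.leadingCoeff]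
  · intro d hd hne
    have hlt : m.toSyn d < m.toSyn (m.degree g) :=
      lt_of_le_of_ne (m.le_degree hd) fun h => hne (m.toSyn.injective h)
    rw [coeff_smul, m.coeff_eq_zero_of_lt (f := b d) (by rwa [hdegree]), smul_zero]
  · intro h
    rw [notMem_support_iff.mp h, zero_smul, coeff_zero]

end Triangular

section PurePowers

variable {R ι : Type*} [CommRing R]

variable [IsDomain R] {m : MonomialOrder ι} {f : MvPolynomial ι R} {i : ι} {Q : ℕ}

variable (m i Q) in
theorem monomialOrder_degree_X_pow :
    m.degree (X i ^ Q : MvPolynomial ι R) = Finsupp.single i Q := by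
  rw [m.degree_pow, m.degree_X, Finsupp.smul_single, smul_eq_mul, mul_one]

theorem monomialOrder_degree_X_pow_sub (hf : m.degree f ≺[m] Finsupp.single i Q) :
    m.degree (X i ^ Q - f) = Finsupp.single i Q := by
  rw [m.degree_sub_of_lt (by rwa [monomialOrder_degree_X_pow]), monomialOrder_degree_X_pow]

theorem monomialOrder_monic_X_pow_sub (hf : m.degree f ≺[m] Finsupp.single i Q) :
    m.Monic (X i ^ Q - f) := by
  rw [MonomialOrder.Monic, m.leadingCoeff_sub_of_lt (by rwa [monomialOrder_degree_X_pow])]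
  exact m.monic_X.pow

end PurePowers

section PowSub

variable {R ι : Type*} [CommRing R]

section Substitution

variable [Fintype ι]

/-- The monomial `X ^ d` with every factor `X i ^ Q` replaced by `X i ^ Q - f i`. When
the `f i` are small, these form a basis which is triangular with respect to the monomials. -/
noncomputable def powSubMonomial (Q : ℕ) (f : ι → MvPolynomial ι R) (d : ι →₀ ℕ) :
    MvPolynomial ι R :=
  ∏ i, X i ^ (d i % Q) * (X i ^ Q - f i) ^ (d i / Q)

/-- The linear map carrying `X ^ d` to `powSubMonomial Q f d`. It carries the ideal generated by the
`X i ^ Q` to the ideal generated by the `X i ^ Q - f i`. -/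
noncomputable def powSubMap (Q : ℕ) (f : ι → MvPolynomial ι R) :
    MvPolynomial ι R →ₗ[R] MvPolynomial ι R :=
  (basisMonomials ι R).constr R (powSubMonomial Q f)

theorem powSubMonomial_single_add {Q : ℕ} (hQ : 0 < Q) (f : ι → MvPolynomial ι R) (i : ι)
    (d : ι →₀ ℕ) :
    powSubMonomial Q f (Finsupp.single i Q + d) = (X i ^ Q - f i) * powSubMonomial Q f d := by
  classical
  have hfactor (j : ι) : X j ^ ((Finsupp.single i Q + d) j % Q) *
      (X j ^ Q - f j) ^ ((Finsupp.single i Q + d) j / Q) =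
      (if j = i then X i ^ Q - f i else 1) * (X j ^ (d j % Q) * (X j ^ Q - f j) ^ (d j / Q)) := by
    split_ifs with h
    · subst h
      rw [Finsupp.add_apply, Finsupp.single_eq_same, Nat.add_mod_left, Nat.add_div_left _ hQ]
      ring
    · rw [Finsupp.add_apply, Finsupp.single_eq_of_ne h, zero_add, one_mul]
  simp only [powSubMonomial, hfactor, Finset.prod_mul_distrib, Finset.prod_ite_eq',
    Finset.mem_univ, if_true]

theorem powSubMap_X_pow_mul {Q : ℕ} (hQ : 0 < Q) (f : ι → MvPolynomial ι R) (i : ι)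
    (h : MvPolynomial ι R) :
    powSubMap Q f (X i ^ Q * h) = (X i ^ Q - f i) * powSubMap Q f h := by
  have hmonomial (d : ι →₀ ℕ) (r : R) :
      powSubMap Q f (monomial d r) = r • powSubMonomial Q f d := by
    rw [← mul_one r, ← smul_eq_mul, ← smul_monomial, map_smul, smul_eq_mul, mul_one]
    exact congrArg (r • ·) ((basisMonomials ι R).constr_basis R _ d)
  induction h using MvPolynomial.induction_on' with
  | add h₁ h₂ ih₁ ih₂ => rw [mul_add, map_add, ih₁, ih₂, map_add, mul_add]
  | monomial d r =>
    rw [X_pow_eq_monomial, monomial_mul, one_mul, hmonomial, hmonomial,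
      powSubMonomial_single_add hQ, X_pow_eq_monomial, mul_smul_comm]

end Substitution

variable [IsDomain R] {m : MonomialOrder ι} {f : ι → MvPolynomial ι R} {Q : ℕ}

theorem monic_powSubMonomial [Fintype ι] (hf : ∀ i, m.degree (f i) ≺[m] Finsupp.single i Q)
    (d : ι →₀ ℕ) : m.Monic (powSubMonomial Q f d) :=
  .prod fun i _ => m.monic_X.pow.mul (monomialOrder_monic_X_pow_sub (hf i)).pow

theorem degree_powSubMonomial [Fintype ι] (hf : ∀ i, m.degree (f i) ≺[m] Finsupp.single i Q)
    (d : ι →₀ ℕ) : m.degree (powSubMonomial Q f d) = d := by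
  have hrel (i : ι) := monomialOrder_monic_X_pow_sub (hf i)
  rw [powSubMonomial, m.degree_prod fun i _ => (m.monic_X.pow.mul (hrel i).pow).ne_zero]
  conv_rhs => rw [← Finsupp.univ_sum_single d]
  refine Finset.sum_congr rfl fun i _ => ?_
  rw [m.degree_mul m.monic_X.pow.ne_zero (hrel i).pow.ne_zero, m.degree_pow, m.degree_pow,
    m.degree_X, monomialOrder_degree_X_pow_sub (hf i), Finsupp.smul_single, Finsupp.smul_single,
    ← Finsupp.single_add, smul_eq_mul, smul_eq_mul, mul_one, Nat.mod_add_div']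

theorem exists_le_of_mem_span_X_pow_sub [Finite ι] (hQ : 0 < Q)
    (hf : ∀ i, m.degree (f i) ≺[m] Finsupp.single i Q) {g : MvPolynomial ι R}
    (hg : g ∈ Ideal.span (Set.range fun i => X i ^ Q - f i)) (hg0 : g ≠ 0) :
    ∃ d ∈ g.support, ∃ i, Q ≤ d i := by
  have := Fintype.ofFinite ι
  have hmonic := monic_powSubMonomial hf
  have hdegree := degree_powSubMonomial hf
  obtain ⟨c, rfl⟩ := Ideal.mem_span_range_iff_exists_fun.mp hg
  choose h hh using fun i => basisMonomials_constr_surjective hmonic hdegree (c i)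
  set g' := ∑ i, X i ^ Q * h i with hg'
  have hmap : powSubMap Q f g' = ∑ i, c i * (X i ^ Q - f i) := by
    rw [map_sum]
    refine Finset.sum_congr rfl fun i _ => ?_
    rw [powSubMap_X_pow_mul hQ, mul_comm (c i), ← hh i, powSubMap]
  rw [← hmap] at hg0 ⊢
  have hg'0 : g' ≠ 0 := fun h0 => hg0 (by rw [h0, map_zero])
  refine ⟨m.degree g', ?_, ?_⟩
  · rw [mem_support_iff, powSubMap, coeff_degree_basisMonomials_constr hmonic hdegree]
    exact m.leadingCoeff_ne_zero_iff.mpr hg'0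
  · have hideal : g' ∈ Ideal.span ((fun d => monomial d (1 : R)) ''
        Set.range fun i => Finsupp.single i Q) := by
      refine Ideal.sum_mem _ fun i _ => Ideal.mul_mem_right _ _ (Ideal.subset_span ?_)
      exact ⟨_, ⟨i, rfl⟩, (X_pow_eq_monomial).symm⟩
    obtain ⟨_, ⟨i, rfl⟩, hle⟩ :=
      mem_ideal_span_monomial_image.mp hideal _ (m.degree_mem_support hg'0)
    exact ⟨i, by simpa using hle i⟩

theorem eq_zero_of_mem_span_X_pow_sub [Finite ι] (hf : ∀ i, (f i).totalDegree < Q)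
    {g : MvPolynomial ι R} (hg : g ∈ Ideal.span (Set.range fun i => X i ^ Q - f i))
    (hdeg : g.totalDegree < Q) :
    g = 0 := by
  by_contra hg0
  let : LinearOrder ι := LinearOrder.lift' (Finite.equivFin ι) (Finite.equivFin ι).injective
  have hlt (i : ι) : MonomialOrder.degLex.degree (f i) ≺[MonomialOrder.degLex]
      Finsupp.single i Q := by
    rw [MonomialOrder.degLex_lt_iff, Finsupp.DegLex.lt_iff]
    left
    simpa [degree_degLexDegree] using hf i
  obtain ⟨d, hd, i, hi⟩ := exists_le_of_mem_span_X_pow_sub (Nat.zero_lt_of_lt hdeg) hlt hg hg0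
  have := (hi.trans (Finsupp.le_degree i d)).trans (le_totalDegree hd)
  omega

end PowSub

end LowDegree

section Kronecker

variable {n Q : ℕ}

theorem eq_of_sum_mul_pow_eq {v w : Fin n → ℕ} (hv : ∀ i, v i < Q) (hw : ∀ i, w i < Q)
    (h : ∑ i, v i * Q ^ (i : ℕ) = ∑ i, w i * Q ^ (i : ℕ)) : v = w := by
  have heq : finFunctionFinEquiv (fun i => (⟨v i, hv i⟩ : Fin Q)) =
      finFunctionFinEquiv fun i => ⟨w i, hw i⟩ :=
    Fin.ext (by simpa only [finFunctionFinEquiv_apply] using h)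
  funext i
  exact congrArg Fin.val (congrFun (finFunctionFinEquiv.injective heq) i)

variable {R : Type*} [CommRing R]

/-- Kronecker's substitution `X i ↦ X ^ Q ^ i`, which is injective on polynomials all of whose
exponents are less than `Q`. -/
noncomputable def kroneckerSubst (Q n : ℕ) : MvPolynomial (Fin n) R →ₐ[R] Polynomial R :=
  MvPolynomial.aeval fun i => Polynomial.X ^ Q ^ (i : ℕ)

theorem kroneckerSubst_eq_sum (h : MvPolynomial (Fin n) R) :
    kroneckerSubst Q n h =
      ∑ d ∈ h.support, Polynomial.C (h.coeff d) * Polynomial.X ^ ∑ i, d i * Q ^ (i : ℕ) := by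
  rw [kroneckerSubst, MvPolynomial.aeval_def, MvPolynomial.eval₂_eq']
  refine Finset.sum_congr rfl fun d _ => ?_
  simp only [← pow_mul, mul_comm (Q ^ _), Finset.prod_pow_eq_pow_sum, Polynomial.C_eq_algebraMap]

theorem kroneckerSubst_ne_zero {h : MvPolynomial (Fin n) R} (hh : h ≠ 0) (hQ : h.totalDegree < Q) :
    kroneckerSubst Q n h ≠ 0 := by
  obtain ⟨d, hd⟩ := Finset.nonempty_iff_ne_empty.mpr (mt MvPolynomial.support_eq_empty.mp hh)
  have hlt {c : Fin n →₀ ℕ} (hc : c ∈ h.support) (i : Fin n) : c i < Q :=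
    ((Finsupp.le_degree i c).trans (MvPolynomial.le_totalDegree hc)).trans_lt hQ
  have hcoeff : (kroneckerSubst Q n h).coeff (∑ i, d i * Q ^ (i : ℕ)) = h.coeff d := by
    rw [kroneckerSubst_eq_sum, Polynomial.finsetSum_coeff, Finset.sum_eq_single d]
    · rw [Polynomial.coeff_C_mul, Polynomial.coeff_X_pow_self, mul_one]
    · intro c hc hne
      rw [Polynomial.coeff_C_mul, Polynomial.coeff_X_pow, if_neg, mul_zero]
      exact fun heq => hne (DFunLike.coe_injective
        (eq_of_sum_mul_pow_eq (hlt hc) (hlt hd) heq.symm))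
    · exact fun hnot => absurd hd hnot
  intro h0
  rw [h0, Polynomial.coeff_zero] at hcoeff
  exact MvPolynomial.mem_support_iff.mp hd hcoeff.symm

theorem natDegree_kroneckerSubst_le (h : MvPolynomial (Fin (n + 1)) R) (hQ : 0 < Q) :
    (kroneckerSubst Q (n + 1) h).natDegree ≤ h.totalDegree * Q ^ n := by
  rw [kroneckerSubst_eq_sum]
  refine Polynomial.natDegree_sum_le_of_forall_le _ _ fun d hd => ?_
  calc (Polynomial.C (h.coeff d) * Polynomial.X ^ ∑ i, d i * Q ^ (i : ℕ)).natDegree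
      ≤ ∑ i, d i * Q ^ (i : ℕ) := Polynomial.natDegree_C_mul_X_pow_le _ _
    _ ≤ ∑ i, d i * Q ^ n := by gcongr with i; exact i.is_le
    _ = d.degree * Q ^ n := by rw [← Finset.sum_mul, Finsupp.degree_eq_sum]
    _ ≤ h.totalDegree * Q ^ n := by gcongr; exact MvPolynomial.le_totalDegree hd

end Kronecker

theorem pow_natDegree_eq_zero_of_isNilpotent {K A : Type*} [Field K] [Ring A] [Algebra K A] {y : A}
    (hy : IsNilpotent y) {q : Polynomial K} (hq : q ≠ 0) (h : Polynomial.aeval y q = 0) :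
    y ^ q.natDegree = 0 := by
  obtain ⟨N, hN⟩ := hy
  have hdvd : minpoly K y ∣ Polynomial.X ^ N := minpoly.dvd K y (by simpa using hN)
  obtain ⟨s, -, hs⟩ := (dvd_prime_pow Polynomial.prime_X N).mp hdvd
  have hpow : y ^ s = 0 := by
    simpa using Polynomial.aeval_eq_zero_of_dvd_aeval_eq_zero hs.dvd (minpoly.aeval K y)
  refine pow_eq_zero_of_le ?_ hpow
  simpa using Polynomial.natDegree_le_of_dvd (hs.symm.dvd.trans (minpoly.dvd K y h)) hq

section QuasiFixedPoints

open MvPolynomial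

theorem not_algebraicIndependent_fin_of_card_lt {R ι : Type*} [CommRing R] [IsDomain R]
    [Fintype ι] {n : ℕ} (hn : Fintype.card ι < n) (y : Fin n → MvPolynomial ι R) :
    ¬ AlgebraicIndependent R y := by
  intro h
  have hcard := h.lift_cardinalMk_le_trdeg
  rw [MvPolynomial.trdeg_of_isDomain] at hcard
  simp only [Cardinal.mk_fintype, Fintype.card_fin, Cardinal.lift_natCast, Nat.cast_le] at hcard
  omega

variable {K ι : Type*} [Field K] [Fintype K] {σ : MvPolynomial ι K →ₐ[K] MvPolynomial ι K}

theorem mk_pow_apply_eq_pow {I : Ideal (MvPolynomial ι K)} {e : ℕ}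
    (hI : ∀ i, X i ^ Fintype.card K ^ e - σ (X i) ∈ I) (j : ℕ) (g : MvPolynomial ι K) :
    Ideal.Quotient.mk I ((σ ^ j) g) = Ideal.Quotient.mk I g ^ (Fintype.card K ^ e) ^ j := by
  have hfrob : (Ideal.Quotient.mkₐ K I).comp σ =
      (Ideal.Quotient.mkₐ K I).comp (FiniteField.frobeniusAlgHom K _ ^ e) := by
    refine MvPolynomial.algHom_ext fun i => ?_
    simp only [AlgHom.comp_apply, AlgHom.coe_pow, FiniteField.coe_frobeniusAlgHom, pow_iterate]
    exact (Ideal.Quotient.eq.mpr (hI i)).symm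
  have hstep (g : MvPolynomial ι K) :
      Ideal.Quotient.mk I (σ g) = Ideal.Quotient.mk I g ^ Fintype.card K ^ e := by
    simpa [AlgHom.coe_pow, FiniteField.coe_frobeniusAlgHom, pow_iterate] using
      DFunLike.congr_fun hfrob g
  induction j with
  | zero => simp
  | succ j ih => rw [pow_succ', AlgHom.mul_apply, hstep, ih, ← pow_mul, pow_succ]

/-- Modulo the ideal, `σ` is the `Q`-th power map with `Q = |K| ^ e`, so Kronecker's substitution
turns the relation `h` into a polynomial of degree at most `deg h * Q ^ n` vanishing at `D`. If `D`
is nilpotent modulo the ideal, then `(σ ^ n) D ^ deg h = D ^ (deg h * Q ^ n) = 0` there, although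
the ideal contains no nonzero polynomials of degree less than `Q`. -/
theorem not_isNilpotent_mk_of_totalDegree_lt [Finite ι] {n e : ℕ} {D : MvPolynomial ι K}
    {h : MvPolynomial (Fin (n + 1)) K} (hh : h ≠ 0)
    (hrel : aeval (fun j : Fin (n + 1) => (σ ^ (j : ℕ)) D) h = 0) (hD : (σ ^ n) D ≠ 0)
    (hX : ∀ i, (σ (X i)).totalDegree < Fintype.card K ^ e)
    (hhe : h.totalDegree < Fintype.card K ^ e)
    (hpow : ((σ ^ n) D ^ h.totalDegree).totalDegree < Fintype.card K ^ e) :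
    ¬ IsNilpotent (Ideal.Quotient.mk
      (Ideal.span (Set.range fun i => X i ^ Fintype.card K ^ e - σ (X i))) D) := by
  intro hnil
  set Q := Fintype.card K ^ e
  set I := Ideal.span (Set.range fun i => X i ^ Q - σ (X i))
  have hmk := mk_pow_apply_eq_pow (σ := σ) (I := I) fun i => Ideal.subset_span ⟨i, rfl⟩
  have hroot : Polynomial.aeval (Ideal.Quotient.mk I D) (kroneckerSubst Q (n + 1) h) = 0 := by
    have himage := congrArg (Ideal.Quotient.mkₐ K I) hrel
    rw [← AlgHom.comp_apply, comp_aeval, map_zero] at himage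
    rw [kroneckerSubst, ← AlgHom.comp_apply, comp_aeval, ← himage]
    simp only [Ideal.Quotient.mkₐ_eq_mk, hmk, map_pow, Polynomial.aeval_X, Q]
  have hzero := pow_natDegree_eq_zero_of_isNilpotent hnil (kroneckerSubst_ne_zero hh hhe) hroot
  have hmem : (σ ^ n) D ^ h.totalDegree ∈ I := by
    rw [← Ideal.Quotient.eq_zero_iff_mem, map_pow, hmk, ← pow_mul, mul_comm]
    exact pow_eq_zero_of_le (natDegree_kroneckerSubst_le h (Nat.zero_lt_of_lt hhe)) hzero
  exact hD (eq_zero_of_pow_eq_zero (eq_zero_of_mem_span_X_pow_sub hX hmem hpow))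

/-- Points where `σ` acts as a power of Frobenius (the quasi-fixed points of Borisov and Sapir)
are dense in the closure of the image of `σ ^ n`. -/
theorem exists_isMaximal_sub_pow_mem [Fintype ι] {n : ℕ} (hn : Fintype.card ι ≤ n)
    {D : MvPolynomial ι K} (hD : (σ ^ n) D ≠ 0) :
    ∃ (M : Ideal (MvPolynomial ι K)) (e : ℕ), M.IsMaximal ∧ D ∉ M ∧
      ∀ g, σ g - g ^ Fintype.card K ^ e ∈ M := by
  obtain ⟨h, hrel, hh⟩ : ∃ h : MvPolynomial (Fin (n + 1)) K,
      aeval (fun j : Fin (n + 1) => (σ ^ (j : ℕ)) D) h = 0 ∧ h ≠ 0 := by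
    simpa [algebraicIndependent_iff] using not_algebraicIndependent_fin_of_card_lt
      (Nat.lt_succ_of_le hn) fun j : Fin (n + 1) => (σ ^ (j : ℕ)) D
  obtain ⟨e, he⟩ : ∃ e, h.totalDegree + ((σ ^ n) D ^ h.totalDegree).totalDegree +
      ∑ i, (σ (X i)).totalDegree < Fintype.card K ^ e :=
    ⟨_, Nat.lt_pow_self Fintype.one_lt_card⟩
  have hX (i : ι) : (σ (X i)).totalDegree < Fintype.card K ^ e := by
    have := Finset.single_le_sum (f := fun i => (σ (X i)).totalDegree) (fun _ _ => Nat.zero_le _)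
      (Finset.mem_univ i)
    omega
  have hnil := not_isNilpotent_mk_of_totalDegree_lt hh hrel hD hX (by omega) (by omega)
  set I := Ideal.span (Set.range fun i => X i ^ Fintype.card K ^ e - σ (X i))
  have hjacobson : D ∉ I.jacobson := by
    rw [← Ideal.radical_eq_jacobson]
    rintro ⟨m, hm⟩
    exact hnil ⟨m, by rwa [← map_pow, Ideal.Quotient.eq_zero_iff_mem]⟩
  simp only [Ideal.jacobson, Submodule.mem_sInf, not_forall] at hjacobson
  obtain ⟨M, ⟨hIM, hM⟩, hDM⟩ := hjacobson
  refine ⟨M, e, hM, hDM, fun g => hIM ?_⟩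
  rw [← Ideal.Quotient.eq, map_pow]
  simpa using mk_pow_apply_eq_pow (σ := σ) (I := I) (fun i => Ideal.subset_span ⟨i, rfl⟩) 1 g

end QuasiFixedPoints

/-! ### Surjectivity modulo powers of a maximal ideal -/

section SimpleRootLifting

open Polynomial

theorem mem_range_of_isNilpotent_sub {A A' : Type*} [CommRing A] [CommRing A'] [Nontrivial A']
    {f : A →+* A'} (hA : ∀ a : A, IsNilpotent a ∨ IsUnit a) {P : A[X]} {x : A'}
    (hroot : P.eval₂ f x = 0) (hderiv : IsUnit (P.derivative.eval₂ f x)) {c : A}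
    (hc : IsNilpotent (f c - x)) : x ∈ f.range := by
  algebraize [f]
  have hclose (q : A[X]) : IsNilpotent (f (q.eval c) - q.eval₂ f x) := by
    obtain ⟨r, hr⟩ := sub_dvd_eval_sub (f c) x (q.map f)
    rw [eval_map_apply, ← eval₂_eq_eval_map] at hr
    exact hr ▸ (Commute.all _ r).isNilpotent_mul_right hc
  have hval : IsNilpotent (aeval c P) := by
    refine (hA _).resolve_right fun hunit => ?_
    have hnil := hclose P
    rw [hroot, sub_zero] at hnil
    exact (hunit.map f).not_isNilpotent hnil
  have hval' : IsUnit (aeval c (derivative P)) := by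
    refine (hA _).resolve_left fun hnil => ?_
    have hnil' := (Commute.all _ _).isNilpotent_sub (hnil.map f) (hclose (derivative P))
    rw [coe_aeval_eq_eval, sub_sub_cancel] at hnil'
    exact hderiv.not_isNilpotent hnil'
  obtain ⟨r, ⟨hcr, hr⟩, -⟩ := existsUnique_nilpotent_sub_and_aeval_eq_zero hval hval'
  have hr' : aeval (f r) P = 0 := by
    rw [show f r = algebraMap A A' r from rfl, aeval_algebraMap_apply, hr, map_zero]
  have hxr : IsNilpotent (x - f r) := by
    have := (Commute.all _ _).isNilpotent_sub (hcr.map f) hc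
    rwa [map_sub, sub_sub_sub_cancel_left] at this
  refine ⟨r, ?_⟩
  have hnil : IsNilpotent (aeval x P) := by rw [show aeval x P = 0 from hroot]; exact .zero
  exact (existsUnique_nilpotent_sub_and_aeval_eq_zero hnil hderiv).unique
    ⟨hxr, hr'⟩ ⟨by simp, hroot⟩

theorem exists_sub_mem_pow_of_simple_roots {K B : Type*} [CommRing K] [CommRing B] [Algebra K B]
    {σ : B →ₐ[K] B} {m : Ideal B} [m.IsMaximal] (hσm : m ≤ m.comap σ)
    (hres : ∀ b, ∃ c, σ c - b ∈ m) {s : Set B} (hs : Algebra.adjoin K s = ⊤)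
    (hroot : ∀ x ∈ s, ∃ P : B[X], P.eval₂ (σ : B →+* B) x = 0 ∧
      P.derivative.eval₂ (σ : B →+* B) x ∉ m) (j : ℕ) (b : B) :
    ∃ c, σ c - b ∈ m ^ j := by
  obtain rfl | hj := eq_or_ne j 0
  · exact ⟨0, by simp⟩
  have hσpow : m ^ j ≤ (m ^ j).comap σ :=
    (Ideal.pow_right_mono hσm j).trans (Ideal.le_comap_pow (σ : B →+* B) j)
  let f := Ideal.quotientMapₐ (m ^ j) σ hσpow
  let π := Ideal.Quotient.mkₐ K (m ^ j)
  have : Nontrivial (B ⧸ m ^ j) := Ideal.Quotient.nontrivial_iff.mpr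
    fun h => Ideal.IsMaximal.ne_top ‹_› (top_le_iff.mp (h ▸ Ideal.pow_le_self hj))
  have hnil {x : B} (hx : x ∈ m) : IsNilpotent (π x) :=
    ⟨j, by rw [← map_pow]; exact Ideal.Quotient.eq_zero_iff_mem.mpr (Ideal.pow_mem_pow hx j)⟩
  have hunit {x : B} (hx : x ∉ m) : IsUnit (π x) := Ideal.Quotient.isUnit_mk_pow_of_notMem m hx
  have hlocal (a : B ⧸ m ^ j) : IsNilpotent a ∨ IsUnit a := by
    obtain ⟨x, rfl⟩ := Ideal.Quotient.mk_surjective a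
    exact (em (x ∈ m)).imp hnil hunit
  have hle : Algebra.adjoin K s ≤ f.range.comap π := by
    refine Algebra.adjoin_le fun x hx => ?_
    obtain ⟨P, hP, hP'⟩ := hroot x hx
    obtain ⟨c, hc⟩ := hres x
    have heval (q : B[X]) :
        (q.map (π : B →+* B ⧸ m ^ j)).eval₂ (f : _ →+* B ⧸ m ^ j) (π x) =
          π (q.eval₂ (σ : B →+* B) x) := by
      rw [eval₂_map]
      exact (hom_eval₂ q (σ : B →+* B) (π : B →+* B ⧸ m ^ j) x).symm
    refine mem_range_of_isNilpotent_sub (f := (f : B ⧸ m ^ j →+* B ⧸ m ^ j)) hlocal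
      (P := P.map (π : B →+* B ⧸ m ^ j)) (c := π c) ?_ ?_ ?_
    · exact (heval P).trans (by rw [hP, map_zero])
    · rw [derivative_map]
      exact (heval _).symm ▸ hunit hP'
    · exact hnil hc
  obtain ⟨c, hc⟩ : b ∈ f.range.comap π := hle (hs ▸ Algebra.mem_top)
  obtain ⟨c, rfl⟩ := Ideal.Quotient.mk_surjective c
  exact ⟨c, Ideal.Quotient.eq.mp hc⟩

end SimpleRootLifting

section SimpleRoots

open Algebra Polynomial

theorem exists_eval₂_derivative_ne_zero {A C : Type*} [CommRing A] [IsDomain A] [CharZero A]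
    [CommRing C] {f : A →+* C} (hf : Function.Injective f) {x : C} {P : A[X]} (hP : P ≠ 0)
    (hx : P.eval₂ f x = 0) : ∃ Q : A[X], Q.eval₂ f x = 0 ∧ Q.derivative.eval₂ f x ≠ 0 := by
  induction hn : P.natDegree using Nat.strong_induction_on generalizing P with
  | _ n ih =>
    by_cases hderiv : P.derivative.eval₂ f x = 0
    · have hdeg : P.natDegree ≠ 0 := by
        intro h0
        rw [eq_C_of_natDegree_eq_zero h0, eval₂_C, map_eq_zero_iff f hf] at hx
        exact hP (by rw [eq_C_of_natDegree_eq_zero h0, hx, C_0])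
      exact ih _ (hn ▸ natDegree_derivative_lt hdeg) (derivative_eq_zero.not.mpr hdeg) hderiv rfl
    · exact ⟨P, hx, hderiv⟩

theorem isAlgebraic_range_of_injective {R A : Type*} [CommRing R] [IsDomain R] [CommRing A]
    [IsDomain A] [Algebra R A] [FaithfulSMul R A] [Algebra.FiniteType R A] {f : A →ₐ[R] A}
    (hf : Function.Injective f) : Algebra.IsAlgebraic f.range A := by
  have hadd := trdeg_add_eq R f.range (A := A)
  rw [← (AlgEquiv.ofInjective f hf).trdeg_eq] at hadd
  exact trdeg_eq_zero_iff.mp (Cardinal.eq_of_add_eq_add_left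
    (hadd.trans (add_zero _).symm) trdeg_lt_aleph0_of_finiteType)

theorem exists_simple_root_of_injective {R A : Type*} [CommRing R] [IsDomain R] [CommRing A]
    [IsDomain A] [CharZero A] [Algebra R A] [FaithfulSMul R A] [Algebra.FiniteType R A]
    {f : A →ₐ[R] A} (hf : Function.Injective f) (x : A) :
    ∃ P : A[X], P.eval₂ (f : A →+* A) x = 0 ∧ P.derivative.eval₂ (f : A →+* A) x ≠ 0 := by
  obtain ⟨Q, hQ, hQx⟩ := (isAlgebraic_range_of_injective hf).isAlgebraic x
  obtain ⟨P, rfl⟩ := Polynomial.map_surjective (f.rangeRestrict : A →+* f.range)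
    f.rangeRestrict_surjective Q
  refine exists_eval₂_derivative_ne_zero (P := P) hf (by rintro rfl; simp at hQ) ?_
  rwa [aeval_def, eval₂_map] at hQx

end SimpleRoots

section EventualRange

open Polynomial

variable {R S : Type*} [CommRing R] [CommRing S] [Algebra R S] (σ : S →ₐ[R] S) (n : ℕ)

theorem exists_forall_ker_pow_succ_le_ker_pow [IsNoetherianRing S] :
    ∃ n₀, ∀ n ≥ n₀, RingHom.ker (σ ^ (n + 1)) ≤ RingHom.ker (σ ^ n) := by
  have hmono : Monotone fun n => RingHom.ker (σ ^ n) := by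
    refine monotone_nat_of_le_succ fun n g hg => ?_
    rw [RingHom.mem_ker] at hg ⊢
    rw [pow_succ', AlgHom.mul_apply, hg, map_zero]
  obtain ⟨n₀, h⟩ := monotone_stabilizes_iff_noetherian.mpr ‹_› ⟨_, hmono⟩
  exact ⟨n₀, fun n hn => ((h (n + 1) (hn.trans n.le_succ)).symm.trans (h n hn)).le⟩

/-- The restriction of `σ` to the range of its power `σ ^ n`. For large `n` and noetherian `S` this
restriction is injective even if `σ` is not. -/
def rangePowRestrict : (σ ^ n).range →ₐ[R] (σ ^ n).range :=
  (σ.comp (σ ^ n).range.val).codRestrict _ <| by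
    rintro ⟨_, g, rfl⟩
    exact ⟨σ g, DFunLike.congr_fun (pow_mul_comm' σ n) g⟩

theorem rangePowRestrict_rangeRestrict (g : S) :
    rangePowRestrict σ n ((σ ^ n).rangeRestrict g) = (σ ^ n).rangeRestrict (σ g) :=
  Subtype.ext (DFunLike.congr_fun (pow_mul_comm' σ n) g).symm

variable {σ n}

theorem rangePowRestrict_injective (h : RingHom.ker (σ ^ (n + 1)) ≤ RingHom.ker (σ ^ n)) :
    Function.Injective (rangePowRestrict σ n) := by
  refine (injective_iff_map_eq_zero _).mpr ?_
  rintro ⟨_, g, rfl⟩ hg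
  have hσg : (σ ^ (n + 1)) g = 0 := by
    rw [pow_succ']
    exact congrArg Subtype.val hg
  exact Subtype.ext (h hσg)

theorem eval₂_rangePowRestrict (H : S[X]) (x : S) :
    (H.map ((σ ^ n).rangeRestrict : S →+* (σ ^ n).range)).eval₂
        (rangePowRestrict σ n : (σ ^ n).range →+* (σ ^ n).range) ((σ ^ n).rangeRestrict x) =
      (σ ^ n).rangeRestrict (H.eval₂ (σ : S →+* S) x) := by
  rw [eval₂_map]
  refine (congrArg (fun f => eval₂ f _ H) (RingHom.ext fun g => ?_)).trans
    (hom_eval₂ H (σ : S →+* S) ((σ ^ n).rangeRestrict : S →+* (σ ^ n).range) x).symm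
  exact rangePowRestrict_rangeRestrict σ n g

theorem exists_simple_root_of_ker_pow_succ_le [IsDomain R] [IsDomain S] [CharZero S]
    [FaithfulSMul R S] [Algebra.FiniteType R S]
    (h : RingHom.ker (σ ^ (n + 1)) ≤ RingHom.ker (σ ^ n)) (x : S) :
    ∃ H : S[X], (σ ^ n) (H.eval₂ (σ : S →+* S) x) = 0 ∧
      (σ ^ n) (H.derivative.eval₂ (σ : S →+* S) x) ≠ 0 := by
  have : Algebra.FiniteType R (σ ^ n).range :=
    .of_surjective (σ ^ n).rangeRestrict (σ ^ n).rangeRestrict_surjective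
  obtain ⟨P, hP, hP'⟩ := exists_simple_root_of_injective (rangePowRestrict_injective h)
    ((σ ^ n).rangeRestrict x)
  obtain ⟨H, rfl⟩ := map_surjective ((σ ^ n).rangeRestrict : S →+* (σ ^ n).range)
    (σ ^ n).rangeRestrict_surjective P
  rw [eval₂_rangePowRestrict] at hP
  rw [derivative_map, eval₂_rangePowRestrict] at hP'
  exact ⟨H, congrArg Subtype.val hP, fun h => hP' (Subtype.ext h)⟩

end EventualRange

section RestrictionToRange

open Polynomial

theorem isMaximal_comap_of_finite_quotient {A B F : Type*} [CommRing A] [CommRing B]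
    [FunLike F A B] [RingHomClass F A B] (f : F) (M : Ideal B) [M.IsPrime] [Finite (B ⧸ M)] :
    (M.comap f).IsMaximal ∧ Finite (A ⧸ M.comap f) := by
  have hfinite : Finite (A ⧸ M.comap f) :=
    Finite.of_injective _ (Ideal.quotientMap_injective (I := M) (f := (f : A →+* B)))
  exact ⟨Ideal.Quotient.maximal_of_isField _ (Finite.isField_of_domain _), hfinite⟩

theorem exists_map_sub_mem_of_finite_quotient {B F : Type*} [CommRing B] [FunLike F B B]
    [RingHomClass F B B] {τ : F} {m : Ideal B} [m.IsMaximal] [Finite (B ⧸ m)]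
    (hm : m ≤ m.comap τ) (b : B) : ∃ c, τ c - b ∈ m := by
  let : Field (B ⧸ m) := Ideal.Quotient.field m
  obtain ⟨y, hy⟩ := Finite.surjective_of_injective
    (Ideal.quotientMap m (τ : B →+* B) hm).injective (Ideal.Quotient.mk m b)
  obtain ⟨c, rfl⟩ := Ideal.Quotient.mk_surjective y
  exact ⟨c, Ideal.Quotient.eq.mp hy⟩

variable {R S : Type*} [CommRing R] [CommRing S] [Algebra R S] {σ : S →ₐ[R] S} {M : Ideal S}
  [M.IsPrime] {q : ℕ}

theorem pow_apply_mem_iff_of_sub_pow_mem (hq : 0 < q) (hσ : ∀ g, σ g - g ^ q ∈ M) (j : ℕ) (g : S) :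
    (σ ^ j) g ∈ M ↔ g ∈ M := by
  have hmem (g : S) : σ g ∈ M ↔ g ∈ M := by
    rw [← sub_add_cancel (σ g) (g ^ q), M.add_mem_iff_right (hσ g),
      ‹M.IsPrime›.pow_mem_iff_mem q hq]
  induction j with
  | zero => rfl
  | succ j ih =>
    rw [pow_succ', AlgHom.mul_apply, hmem]
    exact ih

theorem comap_val_le_comap_rangePowRestrict (hq : 0 < q) (hσ : ∀ g, σ g - g ^ q ∈ M) (n : ℕ) :
    M.comap (σ ^ n).range.val ≤ (M.comap (σ ^ n).range.val).comap (rangePowRestrict σ n) :=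
  fun b hb => (pow_apply_mem_iff_of_sub_pow_mem hq hσ 1 b).mpr hb

theorem exists_rangePowRestrict_sub_mem_pow [Finite (S ⧸ M)] (hq : 0 < q)
    (hσ : ∀ g, σ g - g ^ q ∈ M) {n : ℕ} {s : Set S} (hs : Algebra.adjoin R s = ⊤)
    (hroot : ∀ x ∈ s, ∃ H : S[X], (σ ^ n) (H.eval₂ (σ : S →+* S) x) = 0 ∧
      (σ ^ n) (H.derivative.eval₂ (σ : S →+* S) x) ∉ M)
    (j : ℕ) (b : (σ ^ n).range) :
    ∃ c, rangePowRestrict σ n c - b ∈ M.comap (σ ^ n).range.val ^ j := by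
  obtain ⟨hmax, hfinite⟩ := isMaximal_comap_of_finite_quotient (σ ^ n).range.val M
  have hle := comap_val_le_comap_rangePowRestrict hq hσ n
  have hres : ∀ b, ∃ c, rangePowRestrict σ n c - b ∈ M.comap (σ ^ n).range.val :=
    fun b => exists_map_sub_mem_of_finite_quotient hle b
  have hs' : Algebra.adjoin R ((σ ^ n).rangeRestrict '' s) = ⊤ := by
    rw [← AlgHom.map_adjoin, hs, Algebra.map_top, AlgHom.range_eq_top]
    exact (σ ^ n).rangeRestrict_surjective
  refine exists_sub_mem_pow_of_simple_roots hle hres hs' ?_ j b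
  rintro _ ⟨x, hx, rfl⟩
  obtain ⟨H, hH, hH'⟩ := hroot x hx
  refine ⟨H.map (σ ^ n).rangeRestrict, ?_, fun h => hH' ?_⟩
  · rw [eval₂_rangePowRestrict]
    exact Subtype.ext hH
  · rwa [derivative_map, eval₂_rangePowRestrict] at h

end RestrictionToRange

theorem finite_mvPolynomial_quotient {ι K : Type*} [Finite ι] [Field K] [Finite K]
    (M : Ideal (MvPolynomial ι K)) [M.IsMaximal] : Finite (MvPolynomial ι K ⧸ M) := by
  let : Field (MvPolynomial ι K ⧸ M) := Ideal.Quotient.field M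
  have : Module.Finite K (MvPolynomial ι K ⧸ M) := finite_of_finite_type_of_isJacobsonRing _ _
  exact Module.finite_of_finite K

theorem exists_forall_map_intCast_ne_zero {ι : Type*} {g : MvPolynomial ι ℤ} (hg : g ≠ 0) :
    ∃ N : ℕ, ∀ p > N, MvPolynomial.map (Int.castRingHom (ZMod p)) g ≠ 0 := by
  obtain ⟨d, hd⟩ := MvPolynomial.ne_zero_iff.mp hg
  refine ⟨(MvPolynomial.coeff d g).natAbs, fun p hp h => hd ?_⟩
  have hcoeff := congrArg (MvPolynomial.coeff d) h
  rw [MvPolynomial.coeff_map, MvPolynomial.coeff_zero, eq_intCast,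
    ZMod.intCast_zmod_eq_zero_iff_dvd] at hcoeff
  exact Int.eq_zero_of_dvd_of_natAbs_lt_natAbs hcoeff (by simpa using hp)

section UnipotentAutomorphisms

variable {R A : Type*} [CommRing R] [Ring A] [Algebra R A] {I : Ideal R} {α : RingAut A}

theorem mul_mem_pow_smul_top {i j : ℕ} {x y : A} (hx : x ∈ I ^ i • (⊤ : Submodule R A))
    (hy : y ∈ I ^ j • (⊤ : Submodule R A)) : x * y ∈ I ^ (i + j) • (⊤ : Submodule R A) := by
  refine Submodule.smul_induction_on hx (fun r hr a _ => ?_) fun a b ha hb => ?_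
  · refine Submodule.smul_induction_on hy (fun s hs b _ => ?_) fun b c hb hc => ?_
    · rw [smul_mul_smul_comm, pow_add]
      exact Submodule.smul_mem_smul (Ideal.mul_mem_mul hr hs) trivial
    · rw [mul_add]
      exact add_mem hb hc
  · rw [add_mul]
    exact add_mem ha hb

theorem ringAut_sub_mem_pow_succ_smul_top (hα : ∀ z, α z - z ∈ I ^ 2 • (⊤ : Submodule R A))
    (i : ℕ) {z : A} (hz : z ∈ I ^ i • (⊤ : Submodule R A)) :
    α z - z ∈ I ^ (i + 1) • (⊤ : Submodule R A) := by
  induction i generalizing z with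
  | zero => exact Submodule.smul_mono_left (Ideal.pow_le_pow_right one_le_two) (hα z)
  | succ i ih =>
    refine Submodule.smul_induction_on hz (fun t ht y _ => ?_) fun a b ha hb => ?_
    · rw [pow_succ] at ht
      refine Submodule.mul_induction_on ht (fun r hr s hs => ?_) fun a b ha hb => ?_
      · have hu : r • (1 : A) ∈ I ^ i • (⊤ : Submodule R A) := Submodule.smul_mem_smul hr trivial
        have hv : s • y ∈ I ^ 1 • (⊤ : Submodule R A) :=
          Submodule.smul_mem_smul (by rwa [pow_one]) trivial
        have hαv : α (s • y) ∈ I ^ 1 • (⊤ : Submodule R A) := by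
          have h := Submodule.smul_mono_left (Ideal.pow_le_pow_right one_le_two) (hα (s • y))
          simpa using add_mem h hv
        have h : α ((r * s) • y) - (r * s) • y =
            (α (r • 1) - r • 1) * α (s • y) + r • 1 * (α (s • y) - s • y) := by
          rw [show (r * s) • y = r • (1 : A) * s • y by rw [smul_one_mul, mul_smul], map_mul]
          noncomm_ring
        rw [h]
        exact add_mem (mul_mem_pow_smul_top (ih hu) hαv) (mul_mem_pow_smul_top (j := 2) hu (hα _))
      · rw [add_smul, map_add, add_sub_add_comm]
        exact add_mem ha hb
    · rw [map_add, add_sub_add_comm]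
      exact add_mem ha hb

/-- Being trivial modulo `I ^ 2`, the automorphism `α` acts trivially on the quotients
`I ^ i A / I ^ (i + 1) A`, so `α - 1` is nilpotent; in characteristic `p` its `p ^ j`-th power is
`α ^ p ^ j - 1`. -/
theorem ringAut_pow_char_pow_eq_one {p : ℕ} [Fact p.Prime] (hp : (p : A) = 0) {j : ℕ}
    (hI : I ^ j = ⊥) (hα : ∀ z, α z - z ∈ I ^ 2 • (⊤ : Submodule R A)) : α ^ p ^ j = 1 := by
  let L : AddMonoid.End A := (α : A →+* A).toAddMonoidHom
  have hL (i : ℕ) (z : A) : (L ^ i) z = (α ^ i) z := by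
    induction i with
    | zero => rfl
    | succ i ih => rw [pow_succ', pow_succ', RingAut.mul_apply, ← ih]; rfl
  have hsub (i : ℕ) (z : A) : ((L - 1) ^ i) z ∈ I ^ i • (⊤ : Submodule R A) := by
    induction i with
    | zero => simp
    | succ i ih =>
      rw [pow_succ' (L - 1)]
      exact ringAut_sub_mem_pow_succ_smul_top hα i ih
  have hzero : (L - 1) ^ p ^ j = 0 := by
    refine pow_eq_zero_of_le (Nat.lt_pow_self (Fact.out : p.Prime).one_lt).le
      (AddMonoidHom.ext fun z => ?_)
    have h := hsub j z
    rwa [hI, Submodule.bot_smul, Submodule.mem_bot] at h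
  ext1 z
  cases subsingleton_or_nontrivial A
  · exact Subsingleton.elim _ _
  have : Nontrivial (AddMonoid.End A) :=
    ⟨0, 1, fun h => zero_ne_one (DFunLike.congr_fun h (1 : A))⟩
  have : CharP (AddMonoid.End A) p := by
    rw [CharP.charP_iff_prime_eq_zero (Fact.out : p.Prime)]
    ext z
    simp [AddMonoid.End.natCast_apply, nsmul_eq_mul, hp]
  rw [sub_pow_char_pow_of_commute _ _ (Commute.one_right L), one_pow, sub_eq_zero] at hzero
  rw [← hL, hzero]
  rfl

end UnipotentAutomorphisms

/-! ### Words in `2 × 2` matrices -/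

section Words

open Matrix

variable {α β R S : Type*} [CommRing R] [CommRing S] (X : α → Matrix (Fin 2) (Fin 2) R)

/-- The value of a letter of a free group at a family of `2 × 2` matrices. Inverse letters are sent
to adjugates, so that the matrices need not be invertible. -/
def letterEval : α × Bool → Matrix (Fin 2) (Fin 2) R
  | (i, true) => X i
  | (i, false) => (X i).adjugate

/-- The value of a word at a family of `2 × 2` matrices. Words representing the same element of the
free group have values which agree only up to products of determinants. -/
def wordEval (L : List (α × Bool)) : Matrix (Fin 2) (Fin 2) R :=
  (L.map (letterEval X)).prod

@[simp]
theorem wordEval_nil : wordEval X [] = 1 := rfl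

@[simp]
theorem wordEval_cons (l : α × Bool) (L : List (α × Bool)) :
    wordEval X (l :: L) = letterEval X l * wordEval X L :=
  List.prod_cons

theorem wordEval_append (L L' : List (α × Bool)) :
    wordEval X (L ++ L') = wordEval X L * wordEval X L' := by
  simp [wordEval]

theorem letterEval_not (i : α) (b : Bool) :
    letterEval X (i, !b) = (letterEval X (i, b)).adjugate := by
  cases b <;> simp [letterEval, adjugate_adjugate]

theorem wordEval_invRev (L : List (α × Bool)) :
    wordEval X (FreeGroup.invRev L) = (wordEval X L).adjugate := by
  induction L with
  | nil => simp
  | cons l L ih =>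
    rw [FreeGroup.invRev_cons, wordEval_append, ih, wordEval_cons, adjugate_mul_distrib,
      ← letterEval_not]
    simp [FreeGroup.invRev]

theorem map_wordEval (f : R →+* S) (L : List (α × Bool)) :
    f.mapMatrix (wordEval X L) = wordEval (fun i => f.mapMatrix (X i)) L := by
  have hletter (l : α × Bool) :
      f.mapMatrix (letterEval X l) = letterEval (fun i => f.mapMatrix (X i)) l := by
    obtain ⟨i, _ | _⟩ := l
    · exact f.map_adjugate (X i)
    · rfl
  simp only [wordEval, map_list_prod, List.map_map, Function.comp_def, hletter]

theorem det_letterEval (l : α × Bool) : (letterEval X l).det = (X l.1).det := by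
  obtain ⟨i, _ | _⟩ := l <;> simp [letterEval, det_adjugate]

variable {X}

theorem det_wordEval_mem {M : Submonoid R} (hX : ∀ i, (X i).det ∈ M) (L : List (α × Bool)) :
    (wordEval X L).det ∈ M := by
  induction L with
  | nil => simp
  | cons l L ih =>
    rw [wordEval_cons, det_mul, det_letterEval]
    exact mul_mem (hX _) ih

theorem exists_wordEval_eq_smul_of_red {M : Submonoid R} (hX : ∀ i, (X i).det ∈ M)
    {L L' : List (α × Bool)} (h : FreeGroup.Red L L') :
    ∃ c ∈ M, wordEval X L = c • wordEval X L' := by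
  induction h with
  | refl => exact ⟨1, one_mem M, (one_smul R _).symm⟩
  | tail _ hstep ih =>
    obtain ⟨c, hc, hL⟩ := ih
    cases hstep with
    | @not L₁ L₂ i b =>
      refine ⟨c * (X i).det, mul_mem hc (hX i), ?_⟩
      rw [hL, wordEval_append, wordEval_cons, wordEval_cons, ← mul_assoc (letterEval X (i, b)),
        letterEval_not, mul_adjugate, det_letterEval, wordEval_append, smul_one_mul, mul_smul_comm,
        mul_smul]

variable (X) in
/-- The images of the generators under the substitution `X ↦ φ(X)` of words into matrices, where
`φ` sends each generator to its reduced word. -/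
def wordPullback [DecidableEq α] (φ : FreeGroup β →* FreeGroup α) (i : β) :
    Matrix (Fin 2) (Fin 2) R :=
  wordEval X (φ (FreeGroup.of i)).toWord

theorem map_wordPullback [DecidableEq α] (f : R →+* S) (φ : FreeGroup β →* FreeGroup α) (i : β) :
    f.mapMatrix (wordPullback X φ i) = wordPullback (fun i => f.mapMatrix (X i)) φ i :=
  map_wordEval X f _

theorem exists_wordEval_wordPullback [DecidableEq α] (φ : FreeGroup β →* FreeGroup α)
    (L : List (β × Bool)) :
    ∃ L', FreeGroup.mk L' = φ (FreeGroup.mk L) ∧ wordEval (wordPullback X φ) L = wordEval X L' := by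
  induction L with
  | nil => exact ⟨[], (map_one φ).symm, rfl⟩
  | cons l L ih =>
    obtain ⟨L', hmk, heval⟩ := ih
    have hl : ∃ L₀, FreeGroup.mk L₀ = φ (FreeGroup.mk [l]) ∧
        letterEval (wordPullback X φ) l = wordEval X L₀ := by
      obtain ⟨i, _ | _⟩ := l
      · refine ⟨FreeGroup.invRev (φ (FreeGroup.of i)).toWord, ?_, (wordEval_invRev X _).symm⟩
        rw [← FreeGroup.inv_mk, FreeGroup.mk_toWord, ← map_inv]
        rfl
      · exact ⟨_, FreeGroup.mk_toWord, rfl⟩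
    obtain ⟨L₀, hmk₀, heval₀⟩ := hl
    refine ⟨L₀ ++ L', ?_, ?_⟩
    · rw [← FreeGroup.mul_mk, hmk, hmk₀, ← map_mul, FreeGroup.mul_mk, List.singleton_append]
    · rw [wordEval_cons, heval, heval₀, wordEval_append]

variable (X) in
/-- Only the words representing the identity have scalar values at `X`. When the matrices are
invertible this says that `X` induces an embedding of the free group into `PGL₂`. -/
def IsProjectivelyFaithful : Prop :=
  ∀ L : List (α × Bool), wordEval X L ∈ Set.range (scalar (Fin 2)) → FreeGroup.mk L = 1

theorem IsProjectivelyFaithful.of_map (f : R →+* S)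
    (h : IsProjectivelyFaithful fun i => f.mapMatrix (X i)) : IsProjectivelyFaithful X := by
  rintro L ⟨r, hr⟩
  refine h L ⟨f r, ?_⟩
  rw [← map_wordEval, ← hr]
  simp

theorem IsProjectivelyFaithful.wordPullback [DecidableEq α] {φ : FreeGroup β →* FreeGroup α}
    (hφ : Function.Injective φ) (hX : IsProjectivelyFaithful X) :
    IsProjectivelyFaithful (wordPullback X φ) := by
  intro L hL
  obtain ⟨L', hmk, heval⟩ := exists_wordEval_wordPullback (X := X) φ L
  rw [heval] at hL
  exact hφ (by rw [← hmk, hX L' hL, map_one])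

end Words

section FreeMatrices

open Matrix Polynomial

variable {α R : Type*} [CommRing R] (c : α × Bool → R)

/-- The rank-one matrix with image `(1, c l)` and kernel `(1, c l⁻¹)` attached to a letter `l`; the
sign makes `letterEval_pingPongPencil` uniform in `l`. -/
def rankOneLetter (l : α × Bool) : Matrix (Fin 2) (Fin 2) R :=
  vecMulVec ![1, c l] ((bif l.2 then 1 else -1 : R) • ![-c (l.1, !l.2), 1])

/-- A pencil of matrices for which reduced words behave as in the ping-pong lemma: to leading order
in the variable, the letter `l` acts as `rankOneLetter c l`. -/
noncomputable def pingPongPencil (i : α) : Matrix (Fin 2) (Fin 2) R[X] :=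
  (X : R[X]) • (rankOneLetter c (i, true)).map C + (rankOneLetter c (i, false)).map C

theorem letterEval_pingPongPencil (l : α × Bool) :
    letterEval (pingPongPencil c) l =
      (X : R[X]) • (rankOneLetter c l).map C + (rankOneLetter c (l.1, !l.2)).map C := by
  obtain ⟨i, _ | _⟩ := l
  · rw [letterEval, pingPongPencil, adjugate_fin_two]
    ext1 a b
    fin_cases a <;> fin_cases b <;> simp [rankOneLetter] <;> ring
  · rfl

theorem det_pingPongPencil (i : α) :
    (pingPongPencil c i).det = X * C ((c (i, true) - c (i, false)) ^ 2) := by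
  rw [pingPongPencil, det_fin_two]
  simp [rankOneLetter]
  ring

theorem coeff_length_wordEval_pingPongPencil (L : List (α × Bool)) (a b : Fin 2) :
    (wordEval (pingPongPencil c) L a b).coeff L.length = (L.map (rankOneLetter c)).prod a b := by
  have hletter (l : α × Bool) : matPolyEquiv (letterEval (pingPongPencil c) l) =
      X * C (rankOneLetter c l) + C (rankOneLetter c (l.1, !l.2)) := by
    rw [letterEval_pingPongPencil, map_add, matPolyEquiv_map_smul, matPolyEquiv_map_C,
      matPolyEquiv_map_C, map_X]
  have hcoeff := coeff_list_prod_of_natDegree_le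
    (L.map fun l => X * C (rankOneLetter c l) + C (rankOneLetter c (l.1, !l.2))) 1 (by
      simp only [List.mem_map]
      rintro _ ⟨l, -, rfl⟩
      compute_degree)
  rw [← matPolyEquiv_coeff_apply, wordEval, map_list_prod, List.map_map]
  simp only [Function.comp_def, hletter]
  simpa [Function.comp_def, coeff_C] using congrFun₂ hcoeff a b

variable {c} [IsDomain R]

theorem det_pingPongPencil_ne_zero (hc : Function.Injective c) (i : α) :
    (pingPongPencil c i).det ≠ 0 := by
  rw [det_pingPongPencil]
  refine mul_ne_zero X_ne_zero (C_ne_zero.mpr (pow_ne_zero 2 (sub_ne_zero.mpr fun h => ?_)))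
  simpa using hc h

theorem exists_prod_rankOneLetter_eq_vecMulVec (hc : Function.Injective c) {l : α × Bool}
    {L : List (α × Bool)} (hL : FreeGroup.IsReduced (l :: L)) :
    ∃ r : Fin 2 → R, r 1 ≠ 0 ∧
      ((l :: L).map (rankOneLetter c)).prod = vecMulVec ![1, c l] r := by
  induction L generalizing l with
  | nil =>
    refine ⟨_, ?_, List.prod_singleton⟩
    obtain ⟨i, _ | _⟩ := l <;> simp
  | cons l' L ih =>
    rw [FreeGroup.isReduced_cons_cons] at hL
    obtain ⟨r, hr, hprod⟩ := ih hL.2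
    have hne : c l' ≠ c (l.1, !l.2) := by
      intro h
      have h' : l' = (l.1, !l.2) := hc h
      simpa [h'] using hL.1
    refine ⟨_, ?_, by rw [List.map_cons, List.prod_cons, hprod, rankOneLetter,
      vecMulVec_mul_vecMulVec]⟩
    obtain ⟨i, _ | _⟩ := l <;> simp [hr] <;> grind

theorem isProjectivelyFaithful_pingPongPencil (hc : Function.Injective c) :
    IsProjectivelyFaithful (pingPongPencil c) := by
  classical
  rintro L ⟨r, hr⟩
  obtain ⟨d, hd, hred⟩ := exists_wordEval_eq_smul_of_red
    (fun i => mem_nonZeroDivisors_of_ne_zero (det_pingPongPencil_ne_zero hc i))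
    (FreeGroup.reduce.red (L := L))
  have hzero : wordEval (pingPongPencil c) (FreeGroup.reduce L) 0 1 = 0 := by
    have h := congrFun₂ hred 0 1
    rw [← hr] at h
    simpa [nonZeroDivisors.ne_zero hd] using h.symm
  have hreduced : FreeGroup.IsReduced (FreeGroup.reduce L) :=
    FreeGroup.isReduced_iff_reduce_eq.mpr FreeGroup.reduce.idem
  rw [← FreeGroup.reduce.self]
  cases hL : FreeGroup.reduce L with
  | nil => rfl
  | cons l L' =>
    rw [hL] at hzero hreduced
    obtain ⟨r, hr, hprod⟩ := exists_prod_rankOneLetter_eq_vecMulVec hc hreduced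
    refine absurd ?_ hr
    have h := coeff_length_wordEval_pingPongPencil c (l :: L') 0 1
    rw [hzero, hprod] at h
    simpa [vecMulVec_apply] using h.symm

end FreeMatrices

section ConjugationByUnits

/-- Conjugation by units, as a homomorphism into the ring automorphisms. -/
def conjRingAut (A : Type*) [Ring A] : Aˣ →* RingAut A :=
  (MulSemiringAction.toRingAut (ConjAct Aˣ) A).comp ConjAct.toConjAct.toMonoidHom

theorem conjRingAut_apply {A : Type*} [Ring A] (u : Aˣ) (z : A) :
    conjRingAut A u z = u * z * ↑u⁻¹ := rfl

variable {α R : Type*} [CommRing R]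

theorem exists_wordEval_eq_smul_lift (U : α → (Matrix (Fin 2) (Fin 2) R)ˣ) (L : List (α × Bool)) :
    ∃ d : R, wordEval (fun i => (U i : Matrix (Fin 2) (Fin 2) R)) L =
      d • (FreeGroup.lift U (FreeGroup.mk L) : Matrix (Fin 2) (Fin 2) R) := by
  induction L with
  | nil => exact ⟨1, (one_smul R _).symm⟩
  | cons l L ih =>
    obtain ⟨d, hd⟩ := ih
    have hl : ∃ e : R, letterEval (fun i => (U i : Matrix (Fin 2) (Fin 2) R)) l =
        e • (FreeGroup.lift U (FreeGroup.mk [l]) : Matrix (Fin 2) (Fin 2) R) := by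
      obtain ⟨i, _ | _⟩ := l
      · refine ⟨(U i : Matrix (Fin 2) (Fin 2) R).det, ?_⟩
        calc (U i : Matrix (Fin 2) (Fin 2) R).adjugate
            = (U i : Matrix (Fin 2) (Fin 2) R).adjugate * U i * ↑(U i)⁻¹ := by
              rw [Units.mul_inv_cancel_right]
          _ = _ := by simp [Matrix.adjugate_mul]
      · exact ⟨1, by simp [letterEval]⟩
    obtain ⟨e, he⟩ := hl
    refine ⟨e * d, ?_⟩
    have hmk : (FreeGroup.mk (l :: L) : FreeGroup α) = FreeGroup.mk [l] * FreeGroup.mk L := rfl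
    rw [wordEval_cons, he, hd, hmk, map_mul, Units.val_mul, smul_mul_smul_comm]

theorem conjRingAut_lift_mul_wordEval (U : α → (Matrix (Fin 2) (Fin 2) R)ˣ) (L : List (α × Bool))
    (z : Matrix (Fin 2) (Fin 2) R) :
    conjRingAut _ (FreeGroup.lift U (FreeGroup.mk L)) z * wordEval (fun i => (U i).val) L =
      wordEval (fun i => (U i).val) L * z := by
  obtain ⟨d, hd⟩ := exists_wordEval_eq_smul_lift U L
  rw [hd, conjRingAut_apply, mul_smul_comm, smul_mul_assoc, Units.inv_mul_cancel_right]

end ConjugationByUnits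

/-! ### The mapping torus and its matrix representations -/

namespace MappingTorus

variable {k : ℕ} (φ : FreeGroup (Fin k) →* FreeGroup (Fin k))

/-- The canonical homomorphism from the free group to its mapping torus. -/
def base : FreeGroup (Fin k) →* MappingTorus k φ :=
  (PresentedGroup.mk (mappingTorusRels k φ)).comp (FreeGroup.map Option.some)

/-- The element `t` of the mapping torus, which conjugates `base φ w` to `base φ (φ w)`. -/
def stableLetter : MappingTorus k φ :=
  PresentedGroup.of none

theorem stableLetter_mul_base (w : FreeGroup (Fin k)) :
    stableLetter φ * base φ w = base φ (φ w) * stableLetter φ := by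
  rw [← mul_inv_eq_iff_eq_mul]
  have h : (MulAut.conj (stableLetter φ)).toMonoidHom.comp (base φ) = (base φ).comp φ := by
    ext i
    have hrel := PresentedGroup.one_of_mem (rels := mappingTorusRels k φ) ⟨i, rfl⟩
    rw [map_mul, map_mul, map_mul, map_inv, map_inv, mul_inv_eq_one] at hrel
    exact hrel
  exact DFunLike.congr_fun h w

variable {φ}

@[elab_as_elim]
theorem induction_left {P : MappingTorus k φ → Prop} (one : P 1)
    (base_mul : ∀ w g, P g → P (base φ w * g))
    (stableLetter_mul : ∀ g, P g → P (stableLetter φ * g))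
    (stableLetter_inv_mul : ∀ g, P g → P ((stableLetter φ)⁻¹ * g)) (g : MappingTorus k φ) :
    P g := by
  have hg : g ∈ Subgroup.closure
      (Set.range (PresentedGroup.of (rels := mappingTorusRels k φ))) := by
    rw [PresentedGroup.closure_range_of]
    trivial
  induction hg using Subgroup.closure_induction_left with
  | one => exact one
  | mul_left x hx y _ ih =>
    obtain ⟨_ | i, rfl⟩ := hx
    · exact stableLetter_mul y ih
    · exact base_mul (FreeGroup.of i) y ih
  | inv_mul_cancel x hx y _ ih =>
    obtain ⟨_ | i, rfl⟩ := hx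
    · exact stableLetter_inv_mul y ih
    · exact base_mul (FreeGroup.of i)⁻¹ y ih

section Lift

variable {G : Type*} [Group G] (f : FreeGroup (Fin k) →* G) (t : G)

theorem lift_elim_map_some (w : FreeGroup (Fin k)) :
    FreeGroup.lift (fun x : Option (Fin k) => x.elim t fun i => f (FreeGroup.of i))
      (FreeGroup.map Option.some w) = f w :=
  DFunLike.congr_fun (FreeGroup.ext_hom _ _ fun i => by simp :
    (FreeGroup.lift _).comp (FreeGroup.map Option.some) = f) w

variable (h : ∀ i, t * f (FreeGroup.of i) = f (φ (FreeGroup.of i)) * t)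

/-- The universal property of the mapping torus. -/
def lift : MappingTorus k φ →* G :=
  PresentedGroup.toGroup (f := fun x => x.elim t fun i => f (FreeGroup.of i)) <| by
    rintro _ ⟨i, rfl⟩
    rw [map_mul, map_mul, map_mul, map_inv, map_inv, lift_elim_map_some, lift_elim_map_some,
      FreeGroup.lift_apply_of, mul_inv_eq_one, mul_inv_eq_iff_eq_mul]
    exact h i

@[simp]
theorem lift_stableLetter : lift f t h (stableLetter φ) = t :=
  PresentedGroup.toGroup.of _

@[simp]
theorem lift_base (w : FreeGroup (Fin k)) : lift f t h (base φ w) = f w :=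
  lift_elim_map_some f t w

end Lift

variable (φ) in
/-- The homomorphism to `ℤ` which kills the free group and sends the stable letter to `1`. -/
def degree : MappingTorus k φ →* Multiplicative ℤ :=
  lift 1 (Multiplicative.ofAdd (1 : ℤ)) fun _ => by simp

theorem exists_stableLetter_pow_mul_base (a : ℕ) (w : FreeGroup (Fin k)) :
    ∃ w', stableLetter φ ^ a * base φ w = base φ w' * stableLetter φ ^ a := by
  induction a generalizing w with
  | zero => exact ⟨w, by simp⟩
  | succ a ih =>
    obtain ⟨w', hw'⟩ := ih (φ w)
    exact ⟨w', by rw [pow_succ, mul_assoc, stableLetter_mul_base, ← mul_assoc, hw', mul_assoc]⟩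

theorem exists_eq_stableLetter_inv_pow_mul_base_mul (g : MappingTorus k φ) :
    ∃ (a b : ℕ) (w : FreeGroup (Fin k)),
      g = (stableLetter φ)⁻¹ ^ a * base φ w * stableLetter φ ^ b := by
  induction g using induction_left with
  | one => exact ⟨0, 0, 1, by simp⟩
  | base_mul v g ih =>
    obtain ⟨a, b, w, rfl⟩ := ih
    obtain ⟨v', hv'⟩ := exists_stableLetter_pow_mul_base (φ := φ) a v
    have hcomm : base φ v * (stableLetter φ)⁻¹ ^ a = (stableLetter φ)⁻¹ ^ a * base φ v' := by
      rw [inv_pow, eq_inv_mul_iff_mul_eq, ← mul_assoc, hv', mul_inv_cancel_right]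
    exact ⟨a, b, v' * w, by rw [map_mul, ← mul_assoc, ← mul_assoc, hcomm, mul_assoc _ _ (base φ w)]⟩
  | stableLetter_mul g ih =>
    obtain ⟨_ | a, b, w, rfl⟩ := ih
    · refine ⟨0, b + 1, φ w, ?_⟩
      simp only [pow_zero, one_mul, pow_succ', ← mul_assoc, stableLetter_mul_base]
    · refine ⟨a, b, w, ?_⟩
      simp only [pow_succ', mul_assoc, mul_inv_cancel_left]
  | stableLetter_inv_mul g ih =>
    obtain ⟨a, b, w, rfl⟩ := ih
    exact ⟨a + 1, b, w, by simp only [pow_succ', mul_assoc]⟩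

theorem exists_eq_conj_base_of_degree_eq_one {g : MappingTorus k φ} (hg : degree φ g = 1) :
    ∃ (t : MappingTorus k φ) (w : FreeGroup (Fin k)), g = t * base φ w * t⁻¹ := by
  obtain ⟨a, b, w, rfl⟩ := exists_eq_stableLetter_inv_pow_mul_base_mul g
  have hab : a = b := by
    have h := congrArg Multiplicative.toAdd hg
    simp [degree] at h
    omega
  exact ⟨(stableLetter φ)⁻¹ ^ a, w, by rw [hab, inv_pow, inv_inv]⟩

section MatrixRepresentation

variable {R S : Type*} [CommRing R] [CommRing S]

variable (φ) in
/-- The tuple of matrices `X` is carried by `σ` to its substitution under `φ`. Such tuples are what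
it takes to represent the mapping torus, with `σ` playing the role of the stable letter. -/
def IsTwistedFixedPoint (σ : R →+* R) (X : Fin k → Matrix (Fin 2) (Fin 2) R) : Prop :=
  ∀ i, σ.mapMatrix (X i) = wordPullback X φ i

theorem IsTwistedFixedPoint.map {σ : R →+* R} {σ' : S →+* S}
    {X : Fin k → Matrix (Fin 2) (Fin 2) R} (hX : IsTwistedFixedPoint φ σ X) (f : R →+* S)
    (hf : f.comp σ = σ'.comp f) : IsTwistedFixedPoint φ σ' fun i => f.mapMatrix (X i) := by
  intro i
  rw [← map_wordPullback, ← hX i]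
  ext a b
  exact (RingHom.congr_fun hf _).symm

variable {σ : R ≃+* R} {U : Fin k → (Matrix (Fin 2) (Fin 2) R)ˣ}

theorem mapMatrix_mul_conjRingAut_lift
    (hU : IsTwistedFixedPoint φ (σ : R →+* R) fun i => (U i).val) (i : Fin k) :
    (σ.mapMatrix : RingAut (Matrix (Fin 2) (Fin 2) R)) *
        (conjRingAut _).comp (FreeGroup.lift U) (FreeGroup.of i) =
      (conjRingAut _).comp (FreeGroup.lift U) (φ (FreeGroup.of i)) * σ.mapMatrix := by
  ext1 z
  have hunit : IsUnit (σ.mapMatrix (U i).val) := (U i).isUnit.map _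
  refine hunit.mul_left_injective ?_
  have hleft : conjRingAut _ (U i) z * (U i).val = (U i).val * z := by simp [conjRingAut_apply]
  have hright := conjRingAut_lift_mul_wordEval U (φ (FreeGroup.of i)).toWord (σ.mapMatrix z)
  rw [FreeGroup.mk_toWord] at hright
  have hσ : σ.mapMatrix (U i).val = wordEval (fun i => (U i).val) (φ (FreeGroup.of i)).toWord :=
    hU i
  calc σ.mapMatrix (conjRingAut _ (FreeGroup.lift U (FreeGroup.of i)) z) * σ.mapMatrix (U i).val
      = σ.mapMatrix (U i).val * σ.mapMatrix z := by
        rw [FreeGroup.lift_apply_of, ← map_mul, hleft, map_mul]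
    _ = _ := by rw [hσ]; exact hright.symm

/-- The action of the mapping torus on matrices where the free group acts by conjugation and the
stable letter acts entrywise by `σ`. -/
def matrixRep (hU : IsTwistedFixedPoint φ (σ : R →+* R) fun i => (U i).val) :
    MappingTorus k φ →* RingAut (Matrix (Fin 2) (Fin 2) R) :=
  lift ((conjRingAut _).comp (FreeGroup.lift U)) σ.mapMatrix (mapMatrix_mul_conjRingAut_lift hU)

theorem matrixRep_base_mul_wordEval
    (hU : IsTwistedFixedPoint φ (σ : R →+* R) fun i => (U i).val) (w : FreeGroup (Fin k))
    (z : Matrix (Fin 2) (Fin 2) R) :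
    matrixRep hU (base φ w) z * wordEval (fun i => (U i).val) w.toWord =
      wordEval (fun i => (U i).val) w.toWord * z := by
  have h := conjRingAut_lift_mul_wordEval U w.toWord z
  rw [FreeGroup.mk_toWord] at h
  rwa [matrixRep, lift_base]

variable {σ' : S ≃+* S} {U' : Fin k → (Matrix (Fin 2) (Fin 2) S)ˣ}

theorem mapMatrix_matrixRep_apply (hU : IsTwistedFixedPoint φ (σ : R →+* R) fun i => (U i).val)
    (hU' : IsTwistedFixedPoint φ (σ' : S →+* S) fun i => (U' i).val) (f : R →+* S)
    (hf : ∀ r, f (σ r) = σ' (f r)) (hfU : ∀ i, f.mapMatrix (U i).val = (U' i).val)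
    (g : MappingTorus k φ) (z : Matrix (Fin 2) (Fin 2) R) :
    f.mapMatrix (matrixRep hU g z) = matrixRep hU' g (f.mapMatrix z) := by
  have hσ (z : Matrix (Fin 2) (Fin 2) R) :
      f.mapMatrix (σ.mapMatrix z) = σ'.mapMatrix (f.mapMatrix z) := by
    ext a b
    exact hf _
  induction g using induction_left generalizing z with
  | one => simp
  | base_mul w g ih =>
    have hw : Units.map (RingHom.toMonoidHom f.mapMatrix) (FreeGroup.lift U w) =
        FreeGroup.lift U' w :=
      DFunLike.congr_fun (FreeGroup.ext_hom _ _ fun i => by ext1; simpa using hfU i :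
        (Units.map (RingHom.toMonoidHom f.mapMatrix)).comp (FreeGroup.lift U) =
          FreeGroup.lift U') w
    rw [map_mul, map_mul, RingAut.mul_apply, RingAut.mul_apply, ← ih, matrixRep, matrixRep,
      lift_base, lift_base, MonoidHom.comp_apply, MonoidHom.comp_apply, ← hw, conjRingAut_apply,
      conjRingAut_apply, map_mul, map_mul]
    rfl
  | stableLetter_mul g ih =>
    rw [map_mul, map_mul, RingAut.mul_apply, RingAut.mul_apply, ← ih, matrixRep, matrixRep,
      lift_stableLetter, lift_stableLetter, hσ]
  | stableLetter_inv_mul g ih =>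
    refine σ'.mapMatrix.injective ?_
    simp only [matrixRep, map_mul, map_inv, RingAut.mul_apply, lift_stableLetter, ← hσ,
      RingAut.inv_apply, RingEquiv.apply_symm_apply] at ih ⊢
    exact ih z

end MatrixRepresentation

end MappingTorus

/-! ### Congruence quotients -/

namespace ResiduallyFiniteP

variable {p : ℕ} {G : Type*} [Group G]

theorem of_forall_exists_hom (h : ∀ g : G, g ≠ 1 →
    ∃ (Q : Type) (_ : Group Q) (f : G →* Q), ResiduallyFiniteP p Q ∧ f g ≠ 1) :
    ResiduallyFiniteP p G := by
  intro g hg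
  obtain ⟨Q, _, f, hQ, hfg⟩ := h g hg
  obtain ⟨P, _, _, f', -, hP, hfg'⟩ := hQ (f g) hfg
  exact ⟨(f'.comp f).range, inferInstance, Fintype.ofFinite _, (f'.comp f).rangeRestrict,
    (f'.comp f).rangeRestrict_surjective, hP.to_subgroup _,
    fun h => hfg' (congrArg Subtype.val h)⟩

theorem of_isPGroup {Q : Type} [Group Q] [Finite Q] (hQ : IsPGroup p Q) : ResiduallyFiniteP p Q :=
  fun _ hg =>
    ⟨Q, inferInstance, Fintype.ofFinite Q, MonoidHom.id Q, Function.surjective_id, hQ, hg⟩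

theorem multiplicative_int (hp : 1 < p) : ResiduallyFiniteP p (Multiplicative ℤ) := by
  refine of_forall_exists_hom fun g hg => ?_
  obtain ⟨e, he⟩ : ∃ e, g.toAdd.natAbs < p ^ e := ⟨_, Nat.lt_pow_self hp⟩
  have : NeZero (p ^ e) := ⟨by positivity⟩
  have hpGroup : IsPGroup p (Multiplicative (ZMod (p ^ e))) :=
    IsPGroup.of_card (n := e) (by rw [Nat.card_congr Multiplicative.toAdd, Nat.card_zmod])
  refine ⟨_, inferInstance, AddMonoidHom.toMultiplicative (Int.castAddHom (ZMod (p ^ e))),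
    of_isPGroup hpGroup, fun h0 => hg ?_⟩
  have hdvd : ((p ^ e : ℕ) : ℤ) ∣ g.toAdd := (ZMod.intCast_zmod_eq_zero_iff_dvd _ _).mp h0
  exact Int.eq_zero_of_dvd_of_natAbs_lt_natAbs hdvd (by rwa [Int.natAbs_natCast])

end ResiduallyFiniteP

section CongruenceQuotients

variable {B : Type*} [CommRing B] {m : Ideal B} (j : ℕ)

theorem exists_ringEquiv_quotient_pow [IsNoetherianRing B] [Finite (B ⧸ m)] {σ : B →+* B}
    (hσm : m ≤ m.comap σ) (hσ : ∀ b, ∃ c, σ c - b ∈ m ^ j) :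
    ∃ τ : B ⧸ m ^ j ≃+* B ⧸ m ^ j,
      ∀ b, τ (Ideal.Quotient.mk _ b) = Ideal.Quotient.mk _ (σ b) := by
  have hle : m ^ j ≤ (m ^ j).comap σ := by
    rw [← Ideal.map_le_iff_le_comap] at hσm ⊢
    rw [Ideal.map_pow]
    exact Ideal.pow_right_mono hσm j
  have hsurj : Function.Surjective (Ideal.quotientMap (m ^ j) σ hle) := by
    intro y
    obtain ⟨b, rfl⟩ := Ideal.Quotient.mk_surjective y
    obtain ⟨c, hc⟩ := hσ b
    exact ⟨Ideal.Quotient.mk _ c, Ideal.Quotient.eq.mpr hc⟩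
  have := Ideal.finite_quotient_pow (IsNoetherian.noetherian m) j
  exact ⟨RingEquiv.ofBijective _ ⟨Finite.injective_iff_surjective.mpr hsurj, hsurj⟩, fun _ => rfl⟩

theorem exists_units_val_eq_map_quotient_pow {n : Type*} [Fintype n] [DecidableEq n] [m.IsMaximal]
    {X : Matrix n n B} (hX : X.det ∉ m) :
    ∃ U : (Matrix n n (B ⧸ m ^ j))ˣ, U.val = (Ideal.Quotient.mk (m ^ j)).mapMatrix X := by
  have hdet : IsUnit ((Ideal.Quotient.mk (m ^ j)).mapMatrix X).det := by
    rw [← RingHom.map_det]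
    exact Ideal.Quotient.isUnit_mk_pow_of_notMem m hX
  exact (Matrix.isUnit_iff_isUnit_det _).mpr hdet

theorem matrix_mem_smul_top_of_forall_mem {n : Type*} [Finite n] {I : Ideal B}
    {z : Matrix n n B} (hz : ∀ a b, z a b ∈ I) : z ∈ I • (⊤ : Submodule B (Matrix n n B)) := by
  classical
  have := Fintype.ofFinite n
  rw [Matrix.matrix_eq_sum_single z]
  refine Submodule.sum_mem _ fun a _ => Submodule.sum_mem _ fun b _ => ?_
  rw [← mul_one (z a b), ← smul_eq_mul, ← Matrix.smul_single]
  exact Submodule.smul_mem_smul (hz a b) trivial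

end CongruenceQuotients

namespace MappingTorus

variable {k : ℕ} {φ : FreeGroup (Fin k) →* FreeGroup (Fin k)}

theorem matrixRep_pow_char_pow_eq_one {p : ℕ} [Fact p.Prime] {R S : Type*} [CommRing R] [CommRing S]
    {σ : R ≃+* R} {U : Fin k → (Matrix (Fin 2) (Fin 2) R)ˣ}
    {σ' : S ≃+* S} {U' : Fin k → (Matrix (Fin 2) (Fin 2) S)ˣ}
    (hU : IsTwistedFixedPoint φ (σ : R →+* R) fun i => (U i).val)
    (hU' : IsTwistedFixedPoint φ (σ' : S →+* S) fun i => (U' i).val) (f : R →+* S)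
    (hf : ∀ r, f (σ r) = σ' (f r)) (hfU : ∀ i, f.mapMatrix (U i).val = (U' i).val)
    (hp : (p : R) = 0) {I : Ideal R} {j : ℕ} (hI : I ^ j = ⊥) (hker : RingHom.ker f ≤ I ^ 2)
    {g : MappingTorus k φ} (hg : matrixRep hU' g = 1) : matrixRep hU g ^ p ^ j = 1 := by
  have hpA : (p : Matrix (Fin 2) (Fin 2) R) = 0 := by
    rw [← map_natCast (Matrix.scalar (Fin 2)), hp, map_zero]
  refine ringAut_pow_char_pow_eq_one hpA hI fun z => matrix_mem_smul_top_of_forall_mem fun a b =>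
    hker ?_
  have h := mapMatrix_matrixRep_apply hU hU' f hf hfU g z
  rw [hg, RingAut.one_apply] at h
  rw [RingHom.mem_ker, Matrix.sub_apply, map_sub, sub_eq_zero]
  exact congrFun (congrFun h a) b

theorem eq_one_of_forall_matrixRep_base_eq_one {B : Type*} [CommRing B] [IsDomain B]
    [IsNoetherianRing B] {m : Ideal B} (hm : m ≠ ⊤) {X : Fin k → Matrix (Fin 2) (Fin 2) B}
    (hX : IsProjectivelyFaithful X) {τ : ∀ j, B ⧸ m ^ j ≃+* B ⧸ m ^ j}
    {U : ∀ j, Fin k → (Matrix (Fin 2) (Fin 2) (B ⧸ m ^ j))ˣ}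
    (hUX : ∀ j i, (U j i).val = (Ideal.Quotient.mk (m ^ j)).mapMatrix (X i))
    (hU : ∀ j, IsTwistedFixedPoint φ (τ j : B ⧸ m ^ j →+* B ⧸ m ^ j) fun i => (U j i).val)
    {w : FreeGroup (Fin k)} (hw : ∀ j, matrixRep (hU (j + 2)) (base φ w) = 1) : w = 1 := by
  rw [← FreeGroup.mk_toWord (x := w)]
  refine hX _ (Matrix.mem_range_scalar_of_commute_single fun a b _ => ?_)
  set z : Matrix (Fin 2) (Fin 2) B := Matrix.single a b 1
  have hmem (j : ℕ) (c d : Fin 2) :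
      (z * wordEval X w.toWord - wordEval X w.toWord * z) c d ∈ m ^ (j + 2) := by
    have h := matrixRep_base_mul_wordEval (hU (j + 2)) w
      ((Ideal.Quotient.mk (m ^ (j + 2))).mapMatrix z)
    simp only [hw, RingAut.one_apply, hUX, ← map_wordEval, ← map_mul] at h
    exact Ideal.Quotient.eq.mp (congrFun (congrFun h c) d)
  refine sub_eq_zero.mp (Matrix.ext fun c d => ?_)
  rw [Matrix.zero_apply, ← Ideal.mem_bot, ← Ideal.iInf_pow_eq_bot_of_isDomain m hm, Ideal.mem_iInf]
  exact fun j => Ideal.pow_le_pow_right (Nat.le_add_right j 2) (hmem j c d)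

theorem residuallyFiniteP_subgroup {p : ℕ} (hp : 1 < p) {H : Subgroup (MappingTorus k φ)}
    (h : ∀ w, w ≠ 1 → ∃ (Q : Type) (_ : Group Q) (_ : Finite Q) (f : MappingTorus k φ →* Q),
      IsPGroup p (H.map f) ∧ f (base φ w) ≠ 1) : ResiduallyFiniteP p H := by
  refine .of_forall_exists_hom ?_
  rintro ⟨g, hg⟩ hne
  by_cases hdeg : degree φ g = 1
  · obtain ⟨t, w, rfl⟩ := exists_eq_conj_base_of_degree_eq_one hdeg
    have hw : w ≠ 1 := fun hw => hne (Subtype.ext (by simp [hw]))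
    obtain ⟨Q, _, _, f, hf, hfw⟩ := h w hw
    refine ⟨H.map f, inferInstance, f.subgroupMap H, .of_isPGroup hf, fun h1 => hfw ?_⟩
    simpa using congrArg Subtype.val h1
  · exact ⟨_, inferInstance, (degree φ).comp H.subtype, .multiplicative_int hp, hdeg⟩

theorem exists_finiteIndex_residuallyFiniteP {p : ℕ} [Fact p.Prime] {B : Type} [CommRing B]
    [IsDomain B] [IsNoetherianRing B] (hp : (p : B) = 0) {σ : B →+* B} {m : Ideal B} [m.IsMaximal]
    [Finite (B ⧸ m)] (hσm : m ≤ m.comap σ) (hσ : ∀ j b, ∃ c, σ c - b ∈ m ^ j)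
    {X : Fin k → Matrix (Fin 2) (Fin 2) B} (hσX : IsTwistedFixedPoint φ σ X)
    (hdet : ∀ i, (X i).det ∉ m) (hX : IsProjectivelyFaithful X) :
    ∃ H : Subgroup (MappingTorus k φ), H.FiniteIndex ∧ ResiduallyFiniteP p ↥H := by
  choose τ hτ using fun j => exists_ringEquiv_quotient_pow j hσm (hσ j)
  choose U hU using fun j i => exists_units_val_eq_map_quotient_pow j (hdet i)
  have hfix (j : ℕ) : IsTwistedFixedPoint φ (τ j : B ⧸ m ^ j →+* _) fun i => (U j i).val := by
    simp only [hU]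
    exact hσX.map _ (RingHom.ext fun b => (hτ j b).symm)
  let Ψ (j : ℕ) : MappingTorus k φ →* RingAut _ := matrixRep (hfix j)
  have hfinite (j : ℕ) : Finite (RingAut (Matrix (Fin 2) (Fin 2) (B ⧸ m ^ j))) := by
    have := Ideal.finite_quotient_pow (IsNoetherian.noetherian m) j
    exact DFunLike.finite _
  have hpGroup (j : ℕ) : IsPGroup p ((Ψ 2).ker.map (Ψ (j + 2))) := by
    rintro ⟨_, g, hg, rfl⟩
    refine ⟨j + 2, Subtype.ext <| matrixRep_pow_char_pow_eq_one (hfix (j + 2)) (hfix 2)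
      (Ideal.Quotient.factor (Ideal.pow_le_pow_right (Nat.le_add_left 2 j))) ?_ ?_ ?_
      (I := m.map (Ideal.Quotient.mk _)) ?_ ?_ hg⟩
    · intro r
      obtain ⟨b, rfl⟩ := Ideal.Quotient.mk_surjective r
      simp only [hτ, Ideal.Quotient.factor_mk]
    · intro i
      rw [hU, hU]
      rfl
    · rw [← map_natCast (Ideal.Quotient.mk _), hp, map_zero]
    · rw [← Ideal.map_pow, Ideal.map_quotient_self]
    · rw [Ideal.Quotient.factor_ker, Ideal.map_pow]
  refine ⟨(Ψ 2).ker, inferInstance,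
    residuallyFiniteP_subgroup (Fact.out : p.Prime).one_lt fun w hw => ?_⟩
  obtain ⟨j, hj⟩ : ∃ j, Ψ (j + 2) (base φ w) ≠ 1 := by
    by_contra! hΨ
    exact hw (eq_one_of_forall_matrixRep_base_eq_one Ideal.IsPrime.ne_top' hX hU hfix hΨ)
  exact ⟨_, inferInstance, hfinite (j + 2), Ψ (j + 2), hpGroup j, hj⟩

/-! ### Generic matrices and reduction modulo `p` -/

section GenericMatrices

open MvPolynomial

/-- The `i`-th of a family of `2 × 2` matrices whose entries are independent variables. -/
noncomputable def genericMatrix {α : Type*} (R : Type*) [CommRing R] (i : α) :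
    Matrix (Fin 2) (Fin 2) (MvPolynomial (α × Fin 2 × Fin 2) R) :=
  Matrix.of fun a b => X (i, a, b)

variable {k : ℕ} {R S : Type*} [CommRing R] [CommRing S]

theorem det_genericMatrix_ne_zero [Nontrivial R] {α : Type*} (i : α) :
    (genericMatrix R i).det ≠ 0 := by
  have hrename : genericMatrix R i =
      (rename (Prod.mk i)).mapMatrix (Matrix.mvPolynomialX (Fin 2) (Fin 2) R) := by
    ext1 a b
    simp [genericMatrix]
  rw [hrename, ← AlgHom.map_det]
  exact (map_ne_zero_iff _ (rename_injective _ (Prod.mk_right_injective i))).mpr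
    (Matrix.det_mvPolynomialX_ne_zero _ R)

theorem isProjectivelyFaithful_genericMatrix [IsDomain R] {α : Type*} {c : α × Bool → R}
    (hc : Function.Injective c) : IsProjectivelyFaithful (genericMatrix (α := α) R) := by
  let f := aeval (R := R) fun x : α × Fin 2 × Fin 2 => pingPongPencil c x.1 x.2.1 x.2.2
  refine .of_map (f : _ →+* Polynomial R) ?_
  convert isProjectivelyFaithful_pingPongPencil hc using 1
  ext1 i
  ext1 a b
  simp [genericMatrix, f]

/-- The endomorphism of the coordinate ring of `k`-tuples of `2 × 2` matrices that is dual to the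
substitution of a tuple into the words `φ(x₁), …, φ(xₖ)`. -/
noncomputable def genericEnd (R : Type*) [CommRing R] (φ : FreeGroup (Fin k) →* FreeGroup (Fin k)) :
    MvPolynomial (Fin k × Fin 2 × Fin 2) R →ₐ[R] MvPolynomial (Fin k × Fin 2 × Fin 2) R :=
  aeval fun x => wordPullback (genericMatrix R) φ x.1 x.2.1 x.2.2

variable (R) (φ : FreeGroup (Fin k) →* FreeGroup (Fin k))

theorem isTwistedFixedPoint_genericMatrix :
    IsTwistedFixedPoint φ (genericEnd R φ : _ →+* _) (genericMatrix R) := by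
  intro i
  ext1 a b
  simp [genericMatrix, genericEnd]

variable {R}

theorem map_comp_genericEnd (f : R →+* S) :
    (map f).comp (genericEnd R φ : _ →+* MvPolynomial (Fin k × Fin 2 × Fin 2) R) =
      (genericEnd S φ : MvPolynomial (Fin k × Fin 2 × Fin 2) S →+* _).comp (map f) := by
  refine ringHom_ext (fun r => by simp) fun x => ?_
  have hgeneric : (fun i => (map f).mapMatrix (genericMatrix R i)) = genericMatrix (α := Fin k) S :=
    funext fun i => by ext1 a b; simp [genericMatrix]
  have hmap := map_wordPullback (X := genericMatrix R) (map f) φ x.1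
  rw [hgeneric] at hmap
  simpa [genericEnd] using congrFun (congrFun hmap x.2.1) x.2.2

theorem map_genericEnd_pow (f : R →+* S) (n : ℕ) (g : MvPolynomial (Fin k × Fin 2 × Fin 2) R) :
    map f ((genericEnd R φ ^ n) g) = (genericEnd S φ ^ n) (map f g) := by
  induction n generalizing g with
  | zero => rfl
  | succ n ih =>
    simp only [pow_succ, AlgHom.mul_apply, ih]
    exact congrArg _ (RingHom.congr_fun (map_comp_genericEnd φ f) g)

theorem map_eval₂_genericEnd (f : R →+* S)
    (H : Polynomial (MvPolynomial (Fin k × Fin 2 × Fin 2) R))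
    (g : MvPolynomial (Fin k × Fin 2 × Fin 2) R) :
    map f (H.eval₂ (genericEnd R φ : _ →+* _) g) =
      (H.map (map f)).eval₂ (genericEnd S φ : _ →+* _) (map f g) := by
  rw [Polynomial.hom_eval₂, map_comp_genericEnd, Polynomial.eval₂_map]

end GenericMatrices

section Iterates

variable {k : ℕ} {φ : FreeGroup (Fin k) →* FreeGroup (Fin k)} {K S : Type*} [CommRing K]
  [CommRing S] [Algebra K S] {σ : S →ₐ[K] S} {X : Fin k → Matrix (Fin 2) (Fin 2) S}

theorem IsTwistedFixedPoint.mapMatrix_pow_succ (hX : IsTwistedFixedPoint φ (σ : S →+* S) X) (n : ℕ)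
    (i : Fin k) :
    (σ ^ (n + 1)).mapMatrix (X i) = wordPullback (fun i => (σ ^ n).mapMatrix (X i)) φ i := by
  refine Eq.trans ?_ (map_wordPullback (((σ ^ n : S →ₐ[K] S)) : S →+* S) φ i)
  rw [← hX i, pow_succ]
  rfl

theorem IsTwistedFixedPoint.det_mapMatrix_pow_ne_zero [IsDomain S]
    (hX : IsTwistedFixedPoint φ (σ : S →+* S) X) (hdet : ∀ i, (X i).det ≠ 0) (n : ℕ) (i : Fin k) :
    ((σ ^ n).mapMatrix (X i)).det ≠ 0 := by
  induction n generalizing i with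
  | zero => exact hdet i
  | succ n ih =>
    rw [hX.mapMatrix_pow_succ]
    exact nonZeroDivisors.ne_zero
      (det_wordEval_mem (fun i => mem_nonZeroDivisors_of_ne_zero (ih i)) _)

theorem IsTwistedFixedPoint.isProjectivelyFaithful_mapMatrix_pow
    (hX : IsTwistedFixedPoint φ (σ : S →+* S) X) (hφ : Function.Injective φ)
    (hfaithful : IsProjectivelyFaithful X) (n : ℕ) :
    IsProjectivelyFaithful fun i => (σ ^ n).mapMatrix (X i) := by
  induction n with
  | zero => exact hfaithful
  | succ n ih =>
    simp only [hX.mapMatrix_pow_succ]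
    exact ih.wordPullback hφ

end Iterates

section RangeRepresentation

variable {k : ℕ} {φ : FreeGroup (Fin k) →* FreeGroup (Fin k)} {K : Type*} {S : Type} [CommRing K]
  [CommRing S] [IsDomain S] [IsNoetherianRing S] [Algebra K S] {σ : S →ₐ[K] S} {M : Ideal S}
  [M.IsPrime] [Finite (S ⧸ M)] {q : ℕ} {X : Fin k → Matrix (Fin 2) (Fin 2) S}

theorem exists_finiteIndex_residuallyFiniteP_of_sub_pow_mem {p : ℕ} [Fact p.Prime]
    (hp : (p : S) = 0) (hφ : Function.Injective φ) (hq : 0 < q) (hσ : ∀ g, σ g - g ^ q ∈ M) {n : ℕ}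
    {s : Set S} (hs : Algebra.adjoin K s = ⊤)
    (hroot : ∀ x ∈ s, ∃ H : Polynomial S, (σ ^ n) (H.eval₂ (σ : S →+* S) x) = 0 ∧
      H.derivative.eval₂ (σ : S →+* S) x ∉ M)
    (hσX : IsTwistedFixedPoint φ (σ : S →+* S) X) (hdet : ∀ i, (X i).det ∉ M)
    (hX : IsProjectivelyFaithful X) :
    ∃ H : Subgroup (MappingTorus k φ), H.FiniteIndex ∧ ResiduallyFiniteP p ↥H := by
  have hmem := pow_apply_mem_iff_of_sub_pow_mem hq hσ n
  obtain ⟨hmax, hfinite⟩ := isMaximal_comap_of_finite_quotient (σ ^ n).range.val M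
  let π : S →+* (σ ^ n).range := (σ ^ n).rangeRestrict
  have : IsNoetherianRing (σ ^ n).range :=
    isNoetherianRing_of_surjective _ _ π (σ ^ n).rangeRestrict_surjective
  have hfix : IsTwistedFixedPoint φ (rangePowRestrict σ n : _ →+* _) fun i => π.mapMatrix (X i) :=
    hσX.map π (RingHom.ext fun g => (rangePowRestrict_rangeRestrict σ n g).symm)
  have hfaithful : IsProjectivelyFaithful fun i => π.mapMatrix (X i) :=
    .of_map (X := fun i => π.mapMatrix (X i)) ((σ ^ n).range.val : (σ ^ n).range →+* S)
      (hσX.isProjectivelyFaithful_mapMatrix_pow hφ hX n)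
  refine exists_finiteIndex_residuallyFiniteP (m := M.comap (σ ^ n).range.val) (Subtype.ext ?_)
    (comap_val_le_comap_rangePowRestrict hq hσ n)
    (exists_rangePowRestrict_sub_mem_pow hq hσ hs ?_) hfix (fun i h => hdet i ?_) hfaithful
  · simpa using hp
  · intro x hx
    obtain ⟨H, hH, hH'⟩ := hroot x hx
    exact ⟨H, hH, (hmem _).not.mpr hH'⟩
  · rw [← RingHom.map_det] at h
    exact (hmem _).mp h

end RangeRepresentation

section ReductionModP

open MvPolynomial

variable {k : ℕ} {φ : FreeGroup (Fin k) →* FreeGroup (Fin k)}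

theorem exists_forall_zmod_simple_root {n : ℕ}
    (hn : RingHom.ker (genericEnd ℤ φ ^ (n + 1)) ≤ RingHom.ker (genericEnd ℤ φ ^ n))
    (x : Fin k × Fin 2 × Fin 2) :
    ∃ N : ℕ, ∀ p > N, ∃ H : Polynomial (MvPolynomial (Fin k × Fin 2 × Fin 2) (ZMod p)),
      (genericEnd (ZMod p) φ ^ n) (H.eval₂ (genericEnd (ZMod p) φ : _ →+* _) (X x)) = 0 ∧
      (genericEnd (ZMod p) φ ^ n)
        (H.derivative.eval₂ (genericEnd (ZMod p) φ : _ →+* _) (X x)) ≠ 0 := by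
  obtain ⟨H, hH, hH'⟩ := exists_simple_root_of_ker_pow_succ_le hn (X x)
  obtain ⟨N, hN⟩ := exists_forall_map_intCast_ne_zero hH'
  refine ⟨N, fun p hp => ⟨H.map (map (Int.castRingHom (ZMod p))), ?_, ?_⟩⟩
  · rw [← map_X (Int.castRingHom (ZMod p)), ← map_eval₂_genericEnd, ← map_genericEnd_pow, hH,
      map_zero]
  · rw [← map_X (Int.castRingHom (ZMod p)), Polynomial.derivative_map, ← map_eval₂_genericEnd,
      ← map_genericEnd_pow]
    exact hN p hp

theorem exists_finiteIndex_residuallyFiniteP_of_simple_roots (hφ : Function.Injective φ) {p : ℕ}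
    [Fact p.Prime] (hp : 2 * k ≤ p) {n : ℕ} (hn : Fintype.card (Fin k × Fin 2 × Fin 2) ≤ n)
    (hroot : ∀ x : Fin k × Fin 2 × Fin 2,
      ∃ H : Polynomial (MvPolynomial (Fin k × Fin 2 × Fin 2) (ZMod p)),
        (genericEnd (ZMod p) φ ^ n) (H.eval₂ (genericEnd (ZMod p) φ : _ →+* _) (X x)) = 0 ∧
        (genericEnd (ZMod p) φ ^ n)
          (H.derivative.eval₂ (genericEnd (ZMod p) φ : _ →+* _) (X x)) ≠ 0) :
    ∃ H : Subgroup (MappingTorus k φ), H.FiniteIndex ∧ ResiduallyFiniteP p ↥H := by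
  let σ := genericEnd (ZMod p) φ
  have hX := isTwistedFixedPoint_genericMatrix (ZMod p) φ
  choose H hH hH' using hroot
  let D := (∏ i, (genericMatrix (ZMod p) i).det) *
    ∏ x, (H x).derivative.eval₂ (σ : _ →+* _) (X x)
  have hD : (σ ^ n) D ≠ 0 := by
    simp only [D, map_mul, map_prod]
    refine mul_ne_zero (Finset.prod_ne_zero_iff.mpr fun i _ => ?_)
      (Finset.prod_ne_zero_iff.mpr fun x _ => hH' x)
    rw [AlgHom.map_det]
    exact hX.det_mapMatrix_pow_ne_zero det_genericMatrix_ne_zero n i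
  obtain ⟨M, e, hM, hDM, hσM⟩ := exists_isMaximal_sub_pow_mem hn hD
  have : Finite (MvPolynomial (Fin k × Fin 2 × Fin 2) (ZMod p) ⧸ M) :=
    finite_mvPolynomial_quotient M
  refine exists_finiteIndex_residuallyFiniteP_of_sub_pow_mem (X := genericMatrix (ZMod p)) ?_ hφ
    (pow_pos Fintype.card_pos e) hσM (n := n) (adjoin_range_X (R := ZMod p)) ?_ hX ?_ ?_
  · rw [← map_natCast C, CharP.cast_eq_zero, map_zero]
  · rintro _ ⟨x, rfl⟩
    refine ⟨H x, hH x, fun h => hDM (M.mul_mem_left _ (M.mem_of_dvd ?_ h))⟩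
    exact Finset.dvd_prod_of_mem _ (Finset.mem_univ x)
  · refine fun i h => hDM (M.mul_mem_right _ (M.mem_of_dvd ?_ h))
    exact Finset.dvd_prod_of_mem _ (Finset.mem_univ i)
  · obtain ⟨c⟩ := Function.Embedding.nonempty_of_card_le (α := Fin k × Bool) (β := ZMod p)
      (by simp [ZMod.card, mul_comm k, hp])
    exact isProjectivelyFaithful_genericMatrix c.injective

end ReductionModP

end MappingTorus

/-- Every mapping torus of an injective endomorphism of a finitely generated free group is
virtually residually (finite `p`) for every sufficiently large prime `p`. -/
theorem mappingTorus_virtually_residually_p (k : ℕ)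
    (φ : FreeGroup (Fin k) →* FreeGroup (Fin k)) (hφ : Function.Injective φ) :
    ∃ N : ℕ, ∀ p : ℕ, p.Prime → p > N →
      ∃ H : Subgroup (MappingTorus k φ), H.FiniteIndex ∧ ResiduallyFiniteP p ↥H := by
  obtain ⟨n₀, hn₀⟩ := exists_forall_ker_pow_succ_le_ker_pow (MappingTorus.genericEnd ℤ φ)
  let n := max n₀ (Fintype.card (Fin k × Fin 2 × Fin 2))
  choose N hN using MappingTorus.exists_forall_zmod_simple_root (hn₀ n (le_max_left _ _))
  refine ⟨max (2 * k) (Finset.univ.sup N), fun p hp hpN => ?_⟩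
  have : Fact p.Prime := ⟨hp⟩
  obtain ⟨hpk, hpN⟩ := max_lt_iff.mp hpN
  exact MappingTorus.exists_finiteIndex_residuallyFiniteP_of_simple_roots hφ hpk.le
    (le_max_right _ _) fun x => hN x p ((Finset.le_sup (Finset.mem_univ x)).trans_lt hpN)
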